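/- arXiv:2501.14928 — 7 statements merged into one kernel-verified Lean document; each statement's English description precedes it below -/
import Mathlib

section
/- Strong data-processing inequality for locally private channels (Hellinger form): Let α > 0 and let Q be an α-DP channel from a measurable space Z to a measurable space O. Then there exist a probability space (Ω, ρ) and a jointly measurable family (ℓ_ω)_{ω∈Ω} of measurable functions ℓ_ω : Z → [0,1] such that for all probability measures P₁, P₂ on Z: ((e^α − 1)²/(8·e^{2α})) · E_{ω∼ρ}[ D_{ℓ_ω}(P₁,P₂)² ] ≤ D_H²(Q∘P₁, Q∘P₂) ≤ ((e^α − 1)²/8) · E_{ω∼ρ}[ D_{ℓ_ω}(P₁,P₂)² ]. -/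
/-!
Write `K = e^α` and let `ν = ⨅ z, Q z` be the infimum in the complete lattice of measures. The
privacy constraint gives `ν ≤ Q z ≤ K ν` for every `z` (`kernel_le_smul_iInf`). Working with this
lattice infimum rather than with `inf_z q(o|z)` makes the choice of versions of the densities
irrelevant: `q(·|z)` is only controlled almost everywhere, with an exceptional set depending on `z`.

Consequently `Q z` has a density of the form `1 + (K - 1) ℓ(o, z)` with respect to `ν`, where `ℓ` is
jointly measurable with values in `[0,1]` (`exists_test_density`). The test family is `ℓ`, indexed
by `O` with the law `ρ = ν / ν(O)`, and `1/K ≤ ν(O) ≤ 1`.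

The output law `Q∘P` has `ν`-density `1 + (K - 1) ∫ ℓ(o, ·) dP ∈ [1, K]` (`bind_eq_withDensity`).
For `a, b ∈ [1, K]` the number `(√a - √b)²` lies between `(a - b)² / (4K)` and `(a - b)² / 4`
(`sqrt_sub_sq_bounds`), and integrating this against `ν` (`sqHellinger_withDensity`) bounds the
Hellinger distance by multiples of `∫ D_ℓ² dν = ν(O) E_ρ[D_ℓ²]`.
-/

/-- A probability space `(Ω, ρ)` together with a jointly measurable family
`(ℓ_ω)_{ω ∈ Ω}` of measurable functions `ℓ_ω : Z → [0,1]`. -/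
structure TestFamily.{u', v'} (Z : Type u') [MeasurableSpace Z] : Type (max u' (v' + 1)) where
  Ω : Type v'
  [mΩ : MeasurableSpace Ω]
  ρ : MeasureTheory.Measure Ω
  prob : MeasureTheory.IsProbabilityMeasure ρ
  ℓ : Ω → Z → ℝ
  meas : Measurable (Function.uncurry ℓ)
  range01 : ∀ ω z, ℓ ω z ∈ Set.Icc (0 : ℝ) 1

open MeasureTheory ProbabilityTheory
open scoped ENNReal

universe u v

instance {Z : Type u} [MeasurableSpace Z] (tf : TestFamily.{u, v} Z) :
    MeasurableSpace tf.Ω := tf.mΩ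

/-- `D_ℓ(P, Q) := |E_{z ∼ P} ℓ(z) − E_{z ∼ Q} ℓ(z)|`. -/
noncomputable def Dl {Z : Type*} [MeasurableSpace Z] (ℓ : Z → ℝ) (P Q : Measure Z) : ℝ :=
  |(∫ z, ℓ z ∂P) - ∫ z, ℓ z ∂Q|

/-- Squared Hellinger distance
`D_H²(P, Q) := (1/2) ∫ (√(dP/dμ) − √(dQ/dμ))² dμ` (with `μ := P + Q` as the
common dominating measure). -/
noncomputable def sqHellinger {O : Type*} [MeasurableSpace O] (P Q : Measure O) : ℝ :=
  (1 / 2) * ∫ o, (Real.sqrt ((P.rnDeriv (P + Q)) o).toReal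
      - Real.sqrt ((Q.rnDeriv (P + Q)) o).toReal) ^ 2 ∂(P + Q)

/-- For a channel with likelihood ratios bounded by `K`, the lower bound `⨅ z, Q z` (infimum in the
complete lattice of measures) is sharp up to the factor `K`: `K⁻¹ • Q z` is below every `Q z'`,
hence below the infimum. -/
lemma kernel_le_smul_iInf {Z : Type u} {O : Type v} [MeasurableSpace Z] [MeasurableSpace O]
    (Q : Kernel Z O) (K : ℝ≥0∞) (hK0 : K ≠ 0) (hKt : K ≠ ∞)
    (hDP : ∀ z z' : Z, ∀ E : Set O, MeasurableSet E → Q z E ≤ K * Q z' E) (z : Z) :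
    Q z ≤ K • (⨅ z, Q z : Measure O) := by
  have h : K⁻¹ • Q z ≤ (⨅ z, Q z : Measure O) := by
    refine le_iInf fun z' => Measure.le_iff.2 fun E hE => ?_
    rw [Measure.smul_apply, smul_eq_mul, ← ENNReal.div_eq_inv_mul]
    exact ENNReal.div_le_of_le_mul' (hDP z z' E hE)
  refine Measure.le_iff.2 fun E _ => ?_
  have := mul_le_mul_right (h E) K
  rw [Measure.smul_apply, smul_eq_mul, ← mul_assoc, ENNReal.mul_inv_cancel hK0 hKt, one_mul] at this
  simpa using this

/-- Normal form of the channel: with respect to any finite `ν ≪ μ` with `ν ≤ Q z ≤ K ν`, the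
channel has the densities `1 + (K - 1) ℓ(o, z)` for a jointly measurable `[0,1]`-valued `ℓ`. -/
lemma exists_test_density {Z : Type u} {O : Type v} [MeasurableSpace Z] [MeasurableSpace O]
    (Q : Kernel Z O) [IsMarkovKernel Q]
    (μ : Measure O) [SigmaFinite μ] (q : O → Z → ℝ≥0∞)
    (hq : Measurable (Function.uncurry q))
    (hdens : ∀ z : Z, Q z = μ.withDensity fun o => q o z)
    (K : ℝ) (hK : 1 < K) (ν : Measure O) [IsFiniteMeasure ν] (hνμ : ν ≪ μ)
    (h1 : ∀ z, ν ≤ Q z) (h2 : ∀ z, Q z ≤ ENNReal.ofReal K • ν) :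
    ∃ ℓ : O → Z → ℝ, Measurable (Function.uncurry ℓ) ∧ (∀ o z, ℓ o z ∈ Set.Icc (0 : ℝ) 1) ∧
      ∀ z, Q z = ν.withDensity fun o => ENNReal.ofReal (1 + (K - 1) * ℓ o z) := by
  obtain ⟨m, hmm, hνm, hlt⟩ : ∃ m : O → ℝ≥0∞, Measurable m ∧ μ.withDensity m = ν ∧
      ∀ᵐ o ∂μ, m o < ∞ :=
    ⟨ν.rnDeriv μ, Measure.measurable_rnDeriv _ _, Measure.withDensity_rnDeriv_eq _ _ hνμ,
      ν.rnDeriv_lt_top μ⟩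
  obtain ⟨ℓ, hℓdef⟩ : ∃ ℓ : O → Z → ℝ, ∀ o z,
      ℓ o z = max 0 (min 1 (((q o z / m o).toReal - 1) / (K - 1))) := ⟨_, fun _ _ => rfl⟩
  have hℓ : Measurable (Function.uncurry ℓ) := by
    have h : Measurable fun p : O × Z => ((q p.1 p.2 / m p.1).toReal - 1) / (K - 1) :=
      (((hq.div (hmm.comp measurable_fst)).ennreal_toReal).sub_const 1).div_const _
    have e : Function.uncurry ℓ = fun p : O × Z =>
        max 0 (min 1 (((q p.1 p.2 / m p.1).toReal - 1) / (K - 1))) :=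
      funext fun p => hℓdef p.1 p.2
    rw [e]
    exact measurable_const.max (measurable_const.min h)
  have h01 : ∀ o z, ℓ o z ∈ Set.Icc (0 : ℝ) 1 := fun o z => by
    rw [hℓdef]
    exact ⟨le_max_left _ _, max_le zero_le_one (min_le_left _ _)⟩
  refine ⟨ℓ, hℓ, h01, fun z => ?_⟩
  have hqz : Measurable fun o => q o z := hq.comp measurable_prodMk_right
  have hℓz : Measurable fun o => ENNReal.ofReal (1 + (K - 1) * ℓ o z) :=
    (((hℓ.comp measurable_prodMk_right : Measurable fun o => ℓ o z).const_mul _).const_add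
      _).ennreal_ofReal
  have e1 : m ≤ᵐ[μ] fun o => q o z := by
    refine ae_le_of_forall_setLIntegral_le_of_sigmaFinite hmm fun s hs _ => ?_
    rw [← withDensity_apply _ hs, ← withDensity_apply _ hs, hνm, ← hdens]
    exact h1 z s
  have e2 : (fun o => q o z) ≤ᵐ[μ] fun o => ENNReal.ofReal K * m o := by
    refine ae_le_of_forall_setLIntegral_le_of_sigmaFinite hqz fun s hs _ => ?_
    rw [lintegral_const_mul _ hmm, ← withDensity_apply _ hs, ← withDensity_apply _ hs, hνm,
      ← hdens]
    exact h2 z s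
  rw [hdens z]
  conv_rhs => rw [← hνm]
  rw [← withDensity_mul _ hmm hℓz]
  refine withDensity_congr_ae ?_
  filter_upwards [e1, e2, hlt] with o ho1 ho2 ho3
  rw [Pi.mul_apply]
  by_cases h0 : m o = 0
  · rw [h0, zero_mul]
    rw [h0, mul_zero] at ho2
    exact le_antisymm ho2 bot_le
  have hmt : m o ≠ ∞ := ho3.ne
  have hr1 : 1 ≤ q o z / m o := by
    rw [ENNReal.le_div_iff_mul_le (Or.inl h0) (Or.inl hmt), one_mul]; exact ho1
  have hr2 : q o z / m o ≤ ENNReal.ofReal K := ENNReal.div_le_of_le_mul ho2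
  have hrt : q o z / m o ≠ ∞ := ne_top_of_le_ne_top ENNReal.ofReal_ne_top hr2
  have hr1' : 1 ≤ (q o z / m o).toReal := by
    simpa using ENNReal.toReal_mono hrt hr1
  have hr2' : (q o z / m o).toReal ≤ K := ENNReal.toReal_le_of_le_ofReal (by linarith) hr2
  have hK' : 0 < K - 1 := by linarith
  -- the truncation is inactive here
  have hl : ℓ o z = ((q o z / m o).toReal - 1) / (K - 1) := by
    have ha : ((q o z / m o).toReal - 1) / (K - 1) ≤ 1 := (div_le_one hK').2 (by linarith)
    have hb : 0 ≤ ((q o z / m o).toReal - 1) / (K - 1) := div_nonneg (by linarith) hK'.le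
    rw [hℓdef, min_eq_right ha, max_eq_right hb]
  rw [hl, mul_div_cancel₀ _ hK'.ne', add_sub_cancel, ENNReal.ofReal_toReal hrt,
    ENNReal.mul_div_cancel h0 hmt]

/-- Averaging the densities `1 + (K - 1) ℓ(o, z)` over `z ∼ P`. -/
lemma bind_eq_withDensity {Z : Type u} {O : Type v} [MeasurableSpace Z] [MeasurableSpace O]
    (Q : Kernel Z O) (K : ℝ) (hK : 1 < K) (ν : Measure O) [IsFiniteMeasure ν]
    (ℓ : O → Z → ℝ) (hℓ : Measurable (Function.uncurry ℓ))
    (h01 : ∀ o z, ℓ o z ∈ Set.Icc (0 : ℝ) 1)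
    (hQ : ∀ z, Q z = ν.withDensity fun o => ENNReal.ofReal (1 + (K - 1) * ℓ o z))
    (P : Measure Z) [IsProbabilityMeasure P] :
    P.bind (fun z => Q z) =
      ν.withDensity fun o => ENNReal.ofReal (1 + (K - 1) * ∫ z, ℓ o z ∂P) := by
  have hg : Measurable fun p : Z × O => ENNReal.ofReal (1 + (K - 1) * ℓ p.2 p.1) :=
    (((hℓ.comp measurable_swap).const_mul _).const_add _).ennreal_ofReal
  ext s hs
  rw [Measure.bind_apply hs Q.measurable.aemeasurable, withDensity_apply _ hs]
  simp_rw [hQ, withDensity_apply _ hs]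
  rw [lintegral_lintegral_swap hg.aemeasurable]
  refine lintegral_congr fun o => ?_
  have hi : Integrable (fun z => ℓ o z) P :=
    Integrable.of_bound (hℓ.comp measurable_prodMk_left).aestronglyMeasurable 1
      (Filter.Eventually.of_forall fun z => by
        rw [Real.norm_of_nonneg (h01 o z).1]; exact (h01 o z).2)
  have hi' : Integrable (fun z => 1 + (K - 1) * ℓ o z) P :=
    (integrable_const _).add (hi.const_mul _)
  rw [← ofReal_integral_eq_lintegral_ofReal hi'
    (Filter.Eventually.of_forall fun z =>
      add_nonneg zero_le_one (mul_nonneg (by linarith) (h01 o z).1)),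
    integral_add (integrable_const _) (hi.const_mul _), integral_const_mul]
  simp

/-- The squared Hellinger distance may be computed from densities with respect to any dominating
finite measure (here with densities bounded below by `1`, so that no division by zero occurs). -/
lemma sqHellinger_withDensity {O : Type v} [MeasurableSpace O] (ν : Measure O)
    [IsFiniteMeasure ν] (f g : O → ℝ) (hf : Measurable f) (hg : Measurable g)
    (hf1 : ∀ o, 1 ≤ f o) (hg1 : ∀ o, 1 ≤ g o) :
    sqHellinger (ν.withDensity fun o => ENNReal.ofReal (f o))
      (ν.withDensity fun o => ENNReal.ofReal (g o)) =
    (1 / 2) * ∫ o, (Real.sqrt (f o) - Real.sqrt (g o)) ^ 2 ∂ν := by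
  have hs : (ν.withDensity fun o => ENNReal.ofReal (f o)) +
      (ν.withDensity fun o => ENNReal.ofReal (g o)) =
      ν.withDensity fun o => ENNReal.ofReal (f o + g o) := by
    rw [← withDensity_add_left hf.ennreal_ofReal]
    congr 1
    funext o
    exact (ENNReal.ofReal_add (by linarith [hf1 o]) (by linarith [hg1 o])).symm
  have hSm : Measurable fun o => ENNReal.ofReal (f o + g o) := (hf.add hg).ennreal_ofReal
  have key : ∀ h : O → ℝ, Measurable h → (∀ o, 1 ≤ h o) →
      (ν.withDensity fun o => ENNReal.ofReal (h o)).rnDeriv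
        (ν.withDensity fun o => ENNReal.ofReal (f o + g o))
      =ᵐ[ν.withDensity fun o => ENNReal.ofReal (f o + g o)]
        fun o => ENNReal.ofReal (h o / (f o + g o)) := by
    intro h hh hh1
    have hd : Measurable fun o => ENNReal.ofReal (h o / (f o + g o)) :=
      (hh.div (hf.add hg)).ennreal_ofReal
    have : SigmaFinite (ν.withDensity fun o => ENNReal.ofReal (f o + g o)) :=
      SigmaFinite.withDensity_of_ne_top
        (Filter.Eventually.of_forall fun _ => ENNReal.ofReal_ne_top)
    have e : (ν.withDensity fun o => ENNReal.ofReal (h o)) =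
        (ν.withDensity fun o => ENNReal.ofReal (f o + g o)).withDensity
          fun o => ENNReal.ofReal (h o / (f o + g o)) := by
      rw [← withDensity_mul _ hSm hd]
      congr 1
      funext o
      have : 0 < f o + g o := by linarith [hf1 o, hg1 o]
      rw [Pi.mul_apply, ← ENNReal.ofReal_mul this.le, mul_div_cancel₀ _ this.ne']
    rw [e]
    exact Measure.rnDeriv_withDensity _ hd
  unfold sqHellinger
  rw [hs]
  congr 1
  have c : (fun o => (Real.sqrt (((ν.withDensity fun o => ENNReal.ofReal (f o)).rnDeriv
        (ν.withDensity fun o => ENNReal.ofReal (f o + g o))) o).toReal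
      - Real.sqrt (((ν.withDensity fun o => ENNReal.ofReal (g o)).rnDeriv
        (ν.withDensity fun o => ENNReal.ofReal (f o + g o))) o).toReal) ^ 2)
      =ᵐ[ν.withDensity fun o => ENNReal.ofReal (f o + g o)]
      fun o => (Real.sqrt (f o / (f o + g o)) - Real.sqrt (g o / (f o + g o))) ^ 2 := by
    filter_upwards [key f hf hf1, key g hg hg1] with o h1 h2
    have : 0 < f o + g o := by linarith [hf1 o, hg1 o]
    rw [h1, h2, ENNReal.toReal_ofReal (div_nonneg (by linarith [hf1 o]) this.le),
      ENNReal.toReal_ofReal (div_nonneg (by linarith [hg1 o]) this.le)]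
  rw [integral_congr_ae c, integral_withDensity_eq_integral_toReal_smul hSm
    (Filter.Eventually.of_forall fun _ => ENNReal.ofReal_lt_top)]
  refine integral_congr_ae (Filter.Eventually.of_forall fun o => ?_)
  have hS : 0 < f o + g o := by linarith [hf1 o, hg1 o]
  have hS' := Real.sq_sqrt hS.le
  have hS'' : Real.sqrt (f o + g o) ≠ 0 := (Real.sqrt_pos.2 hS).ne'
  simp only [smul_eq_mul]
  rw [ENNReal.toReal_ofReal hS.le, Real.sqrt_div (by linarith [hf1 o]),
    Real.sqrt_div (by linarith [hg1 o]), ← sub_div, div_pow, hS', mul_div_cancel₀ _ hS.ne']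

/-- `(√a - √b)² = (a - b)² / (√a + √b)²`, and `(√a + √b)²` lies between `4` and `4K`. -/
lemma sqrt_sub_sq_bounds (K a b : ℝ) (ha : 1 ≤ a) (hb : 1 ≤ b) (haK : a ≤ K) (hbK : b ≤ K) :
    (a - b) ^ 2 / (4 * K) ≤ (Real.sqrt a - Real.sqrt b) ^ 2 ∧
      (Real.sqrt a - Real.sqrt b) ^ 2 ≤ (a - b) ^ 2 / 4 := by
  have hx := Real.sq_sqrt (by linarith : 0 ≤ a)
  have hy := Real.sq_sqrt (by linarith : 0 ≤ b)
  have hx1 : 1 ≤ Real.sqrt a := Real.one_le_sqrt.2 ha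
  have hy1 : 1 ≤ Real.sqrt b := Real.one_le_sqrt.2 hb
  set x := Real.sqrt a
  set y := Real.sqrt b
  have e : (a - b) ^ 2 = (x - y) ^ 2 * (x + y) ^ 2 := by rw [← hx, ← hy]; ring
  rw [e]
  constructor
  · rw [div_le_iff₀ (by linarith)]
    exact mul_le_mul_of_nonneg_left (by nlinarith [sq_nonneg (x - y)]) (sq_nonneg _)
  · rw [le_div_iff₀ (by norm_num)]
    exact mul_le_mul_of_nonneg_left (by nlinarith) (sq_nonneg _)

/-- **Strong data-processing inequality for locally private channels (Hellinger form).**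
If `Q` is an `α`-DP channel from `Z` to `O` (admitting jointly measurable densities with
respect to a σ-finite measure `μ` on `O`, with measurable pointwise infimum), then there is
a probability space `(Ω, ρ)` and a jointly measurable family `(ℓ_ω)` of `[0,1]`-valued test
functions on `Z` such that for all probability measures `P₁, P₂` on `Z`,
`((e^α − 1)²/(8 e^{2α})) E_ρ[D_{ℓ_ω}(P₁,P₂)²] ≤ D_H²(Q∘P₁, Q∘P₂)
  ≤ ((e^α − 1)²/8) E_ρ[D_{ℓ_ω}(P₁,P₂)²]`. -/
theorem strong_data_processing_hellinger
    {Z : Type u} {O : Type v} [MeasurableSpace Z] [MeasurableSpace O]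
    (α : ℝ) (hα : 0 < α)
    (Q : Kernel Z O) [IsMarkovKernel Q]
    (hDP : ∀ z z' : Z, ∀ E : Set O, MeasurableSet E →
      Q z E ≤ ENNReal.ofReal (Real.exp α) * Q z' E)
    (μ : Measure O) [SigmaFinite μ] (q : O → Z → ℝ≥0∞)
    (hq : Measurable (Function.uncurry q))
    (hdens : ∀ z : Z, Q z = μ.withDensity fun o => q o z)
    (hinf : Measurable fun o => ⨅ z : Z, q o z) :
    ∃ tf : TestFamily.{u, v} Z,
      ∀ P₁ P₂ : Measure Z, IsProbabilityMeasure P₁ → IsProbabilityMeasure P₂ →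
        (Real.exp α - 1) ^ 2 / (8 * Real.exp (2 * α)) *
            ∫ ω, (Dl (tf.ℓ ω) P₁ P₂) ^ 2 ∂tf.ρ ≤
          sqHellinger (P₁.bind fun z => Q z) (P₂.bind fun z => Q z) ∧
        sqHellinger (P₁.bind fun z => Q z) (P₂.bind fun z => Q z) ≤
          (Real.exp α - 1) ^ 2 / 8 * ∫ ω, (Dl (tf.ℓ ω) P₁ P₂) ^ 2 ∂tf.ρ := by
  rcases isEmpty_or_nonempty Z with hZ | ⟨⟨z₀⟩⟩
  · -- there is no probability measure on an empty space, so any family will do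
    refine ⟨{ Ω := PUnit.{v + 1}, mΩ := ⊤, ρ := @Measure.dirac _ ⊤ PUnit.unit,
              prob := @Measure.dirac.isProbabilityMeasure _ ⊤ _, ℓ := fun _ _ => 0,
              meas := measurable_const,
              range01 := fun _ _ => ⟨le_rfl, zero_le_one⟩ }, fun P₁ _ hP₁ _ => ?_⟩
    obtain ⟨z⟩ := P₁.nonempty_of_neZero
    exact hZ.elim z
  set K := Real.exp α with hKdef
  have hK : 1 < K := Real.one_lt_exp_iff.2 hα
  have hK0 : 0 < K := by linarith
  set ν : Measure O := ⨅ z, Q z with hν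
  have h1 : ∀ z, ν ≤ Q z := fun z => iInf_le _ z
  have h2 : ∀ z, Q z ≤ ENNReal.ofReal K • ν :=
    kernel_le_smul_iInf Q _ (ENNReal.ofReal_pos.2 hK0).ne' ENNReal.ofReal_ne_top hDP
  have hfin : IsFiniteMeasure ν :=
    ⟨(h1 z₀ Set.univ).trans_lt (measure_lt_top _ _)⟩
  have hνμ : ν ≪ μ := (Measure.absolutelyContinuous_of_le (h1 z₀)).trans
    (hdens z₀ ▸ withDensity_absolutelyContinuous _ _)
  obtain ⟨ℓ, hℓ, h01, hQ⟩ := exists_test_density Q μ q hq hdens K hK ν hνμ h1 h2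
  -- the total mass `c` of `ν` lies in `[1/K, 1]`
  set c := ν.real Set.univ with hc
  have hc1 : c ≤ 1 := by
    have := h1 z₀ Set.univ
    rw [measure_univ (μ := Q z₀)] at this
    exact ENNReal.toReal_le_of_le_ofReal zero_le_one (by simpa using this)
  have hcK : 1 ≤ K * c := by
    have := h2 z₀ Set.univ
    rw [measure_univ, Measure.smul_apply, smul_eq_mul] at this
    have := ENNReal.toReal_mono (ENNReal.mul_ne_top ENNReal.ofReal_ne_top (measure_ne_top _ _)) this
    rwa [ENNReal.toReal_mul, ENNReal.toReal_ofReal hK0.le, ENNReal.toReal_one] at this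
  have hc0 : 0 < c := by
    by_contra h
    nlinarith
  have hν0 : ν ≠ 0 := by
    rintro h
    simp [hc, h] at hc0
  have : NeZero ν := ⟨hν0⟩
  refine ⟨{ Ω := O, ρ := (ν Set.univ)⁻¹ • ν,
            prob := isProbabilityMeasureSMul, ℓ := ℓ,
            meas := hℓ, range01 := h01 }, fun P₁ P₂ hP₁ hP₂ => ?_⟩
  have hρ : ∫ ω, Dl (ℓ ω) P₁ P₂ ^ 2 ∂((ν Set.univ)⁻¹ • ν) =
      c⁻¹ * ∫ ω, ((∫ z, ℓ ω z ∂P₁) - ∫ z, ℓ ω z ∂P₂) ^ 2 ∂ν := by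
    rw [integral_smul_measure, ENNReal.toReal_inv, smul_eq_mul]
    simp_rw [Dl, sq_abs]
    rfl
  change _ * ∫ ω, Dl (ℓ ω) P₁ P₂ ^ 2 ∂((ν Set.univ)⁻¹ • ν) ≤ _ ∧
    _ ≤ _ * ∫ ω, Dl (ℓ ω) P₁ P₂ ^ 2 ∂((ν Set.univ)⁻¹ • ν)
  have hLm : ∀ P : Measure Z, IsProbabilityMeasure P → Measurable fun o => ∫ z, ℓ o z ∂P :=
    fun P _ => (StronglyMeasurable.integral_prod_right hℓ.stronglyMeasurable).measurable
  have hL0 : ∀ P : Measure Z, ∀ o, 0 ≤ ∫ z, ℓ o z ∂P :=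
    fun P o => integral_nonneg fun z => (h01 o z).1
  have hL1 : ∀ P : Measure Z, IsProbabilityMeasure P → ∀ o, ∫ z, ℓ o z ∂P ≤ 1 := by
    intro P _ o
    have := integral_mono_of_nonneg (μ := P) (f := ℓ o) (g := fun _ => 1)
      (Filter.Eventually.of_forall fun z => (h01 o z).1) (integrable_const _)
      (Filter.Eventually.of_forall fun z => (h01 o z).2)
    simpa using this
  have hm₁ := hLm P₁ hP₁
  have hm₂ := hLm P₂ hP₂
  have b₁0 := hL0 P₁
  have b₂0 := hL0 P₂
  have b₁1 := hL1 P₁ hP₁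
  have b₂1 := hL1 P₂ hP₂
  rw [hρ, bind_eq_withDensity Q K hK ν ℓ hℓ h01 hQ P₁, bind_eq_withDensity Q K hK ν ℓ hℓ h01 hQ P₂]
  have hf : ∀ L : O → ℝ, (∀ o, 0 ≤ L o) → (∀ o, L o ≤ 1) →
      (∀ o, 1 ≤ 1 + (K - 1) * L o) ∧ ∀ o, 1 + (K - 1) * L o ≤ K :=
    fun L h0 h1 => ⟨fun o => by nlinarith [h0 o], fun o => by nlinarith [h1 o]⟩
  obtain ⟨l₁, u₁⟩ := hf _ b₁0 b₁1
  obtain ⟨l₂, u₂⟩ := hf _ b₂0 b₂1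
  have M₁ := (hm₁.const_mul (K - 1)).const_add 1
  have M₂ := (hm₂.const_mul (K - 1)).const_add 1
  rw [sqHellinger_withDensity ν _ _ M₁ M₂ l₁ l₂]
  have pt := fun o => sqrt_sub_sq_bounds K _ _ (l₁ o) (l₂ o) (u₁ o) (u₂ o)
  have iD : Integrable (fun o => ((∫ z, ℓ o z ∂P₁) - ∫ z, ℓ o z ∂P₂) ^ 2) ν := by
    refine Integrable.of_bound ((hm₁.sub hm₂).pow_const 2).aestronglyMeasurable 1
      (Filter.Eventually.of_forall fun o => ?_)
    rw [Real.norm_of_nonneg (sq_nonneg _), sq_le_one_iff_abs_le_one, abs_le]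
    constructor <;> linarith [b₁0 o, b₁1 o, b₂0 o, b₂1 o]
  have hup : ∀ o, (Real.sqrt (1 + (K - 1) * ∫ z, ℓ o z ∂P₁) -
      Real.sqrt (1 + (K - 1) * ∫ z, ℓ o z ∂P₂)) ^ 2 ≤
      (K - 1) ^ 2 / 4 * ((∫ z, ℓ o z ∂P₁) - ∫ z, ℓ o z ∂P₂) ^ 2 :=
    fun o => (pt o).2.trans_eq (by ring)
  have hlo : ∀ o, (K - 1) ^ 2 / (4 * K) * ((∫ z, ℓ o z ∂P₁) - ∫ z, ℓ o z ∂P₂) ^ 2 ≤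
      (Real.sqrt (1 + (K - 1) * ∫ z, ℓ o z ∂P₁) -
      Real.sqrt (1 + (K - 1) * ∫ z, ℓ o z ∂P₂)) ^ 2 :=
    fun o => (pt o).1.trans_eq' (by ring)
  have iH : Integrable (fun o => (Real.sqrt (1 + (K - 1) * ∫ z, ℓ o z ∂P₁) -
      Real.sqrt (1 + (K - 1) * ∫ z, ℓ o z ∂P₂)) ^ 2) ν :=
    (iD.const_mul ((K - 1) ^ 2 / 4)).mono'
      ((M₁.sqrt.sub M₂.sqrt).pow_const 2).aestronglyMeasurable
      (Filter.Eventually.of_forall fun o => by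
        rw [Real.norm_of_nonneg (sq_nonneg _)]; exact hup o)
  have I1 := integral_mono iH (iD.const_mul _) hup
  have I2 := integral_mono (iD.const_mul _) iH hlo
  rw [integral_const_mul] at I1 I2
  have hA : 0 ≤ ∫ o, ((∫ z, ℓ o z ∂P₁) - ∫ z, ℓ o z ∂P₂) ^ 2 ∂ν :=
    integral_nonneg fun o => sq_nonneg _
  generalize ∫ o, ((∫ z, ℓ o z ∂P₁) - ∫ z, ℓ o z ∂P₂) ^ 2 ∂ν = A at I1 I2 hA ⊢
  have hcinv1 : 1 ≤ c⁻¹ := (one_le_inv₀ hc0).2 hc1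
  have hcinvK : c⁻¹ ≤ K := by rw [inv_le_iff_one_le_mul₀ hc0]; exact hcK
  have hexp : Real.exp (2 * α) = K ^ 2 := by rw [two_mul, Real.exp_add, ← hKdef, sq]
  rw [hexp]
  constructor
  · calc (K - 1) ^ 2 / (8 * K ^ 2) * (c⁻¹ * A)
        ≤ (K - 1) ^ 2 / (8 * K ^ 2) * (K * A) := by gcongr
      _ = 1 / 2 * ((K - 1) ^ 2 / (4 * K) * A) := by field_simp; ring
      _ ≤ _ := by gcongr
  · calc _ ≤ 1 / 2 * ((K - 1) ^ 2 / 4 * A) := by gcongr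
      _ = (K - 1) ^ 2 / 8 * (1 * A) := by ring
      _ ≤ (K - 1) ^ 2 / 8 * (c⁻¹ * A) := by gcongr
end

section
/- Hellinger distance to restricted supports: Let P be a probability measure on a measurable space O and let O₀ ⊆ O be a measurable set such that there exists at least one probability measure P′ on O with P′(O₀) = 1 (for instance, O₀ is nonempty and singletons are measurable). Then (1/2)·P(O \ O₀) ≤ inf{ D_H²(P′, P) : P′ a probability measure on O with P′(O₀) = 1 } ≤ P(O \ O₀). -/
/-!
Write `a`, `b` for the densities of `P'`, `P` with respect to `P' + P`.

Lower bound: if `P' O₀ = 1` then `a = 0` almost everywhere off `O₀`, so the integrand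
`(√a - √b)²` equals `b` there, and its integral over `O₀ᶜ` alone is `P O₀ᶜ`
(`half_le_sqHellinger`).

Upper bound: if `P'` dominates the restriction of `P` to `O₀`, then `b ≤ a` almost everywhere on
`O₀`, hence `√(ab) ≥ b` there and `(√a - √b)² = a + b - 2√(ab) ≤ a + b - 2b·1_{O₀}`, whose integral
is `2 - 2 P O₀` (`sqHellinger_le_of_restrict_le`). Such a `P'` exists: the conditional
probability `P(· | O₀)` if `P O₀ > 0`, and any probability measure supported on `O₀` otherwise.
-/

open MeasureTheory

lemma integrable_sqHellinger_integrand {O : Type*} [MeasurableSpace O] (P Q : Measure O)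
    [IsFiniteMeasure P] [IsFiniteMeasure Q] :
    Integrable (fun o => (Real.sqrt ((P.rnDeriv (P + Q)) o).toReal
      - Real.sqrt ((Q.rnDeriv (P + Q)) o).toReal) ^ 2) (P + Q) := by
  have ha : Integrable (fun o => (P.rnDeriv (P + Q) o).toReal) (P + Q) :=
    Measure.integrable_toReal_rnDeriv
  have hb : Integrable (fun o => (Q.rnDeriv (P + Q) o).toReal) (P + Q) :=
    Measure.integrable_toReal_rnDeriv
  refine (ha.add hb).mono' ?_ (Filter.Eventually.of_forall fun o => ?_)
  · have h1 := Measure.measurable_rnDeriv P (P + Q)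
    have h2 := Measure.measurable_rnDeriv Q (P + Q)
    exact Measurable.aestronglyMeasurable (by fun_prop)
  · have h1 : 0 ≤ (P.rnDeriv (P + Q) o).toReal := ENNReal.toReal_nonneg
    have h2 : 0 ≤ (Q.rnDeriv (P + Q) o).toReal := ENNReal.toReal_nonneg
    rw [Real.norm_of_nonneg (sq_nonneg _), Pi.add_apply]
    nlinarith [Real.sq_sqrt h1, Real.sq_sqrt h2,
      mul_nonneg (Real.sqrt_nonneg (P.rnDeriv (P + Q) o).toReal)
        (Real.sqrt_nonneg (Q.rnDeriv (P + Q) o).toReal)]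

lemma absolutelyContinuous_add_left {O : Type*} [MeasurableSpace O] (P Q : Measure O) :
    P ≪ P + Q :=
  (Measure.le_add_right le_rfl).absolutelyContinuous

lemma absolutelyContinuous_add_right {O : Type*} [MeasurableSpace O] (P Q : Measure O) :
    Q ≪ P + Q :=
  (Measure.le_add_left le_rfl).absolutelyContinuous

lemma half_le_sqHellinger {O : Type*} [MeasurableSpace O] (P' P : Measure O)
    [IsFiniteMeasure P'] [IsFiniteMeasure P] {s : Set O} (hs : MeasurableSet s)
    (h0 : P' s = 0) :
    (1 / 2) * (P s).toReal ≤ sqHellinger P' P := by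
  have hzero : ∀ᵐ o ∂(P' + P), o ∈ s → P'.rnDeriv (P' + P) o = 0 := by
    have h := Measure.setLIntegral_rnDeriv (absolutelyContinuous_add_left P' P) s
    rw [h0, lintegral_eq_zero_iff (Measure.measurable_rnDeriv _ _)] at h
    exact (ae_restrict_iff' hs).1 h
  have hint : ∫ o in s, (P.rnDeriv (P' + P) o).toReal ∂(P' + P) = (P s).toReal :=
    Measure.setIntegral_toReal_rnDeriv (absolutelyContinuous_add_right P' P) s
  unfold sqHellinger
  refine mul_le_mul_of_nonneg_left ?_ (by norm_num)
  rw [← hint]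
  refine le_trans (le_of_eq ?_) (setIntegral_le_integral (s := s)
    (integrable_sqHellinger_integrand P' P)
    (Filter.Eventually.of_forall fun o => sq_nonneg _))
  refine setIntegral_congr_ae hs ?_
  filter_upwards [hzero] with o ho hos
  rw [ho hos]
  simp [Real.sq_sqrt]

lemma sqHellinger_le_of_restrict_le {O : Type*} [MeasurableSpace O] (P' P : Measure O)
    [IsProbabilityMeasure P'] [IsProbabilityMeasure P] {s : Set O} (hs : MeasurableSet s)
    (hle : P.restrict s ≤ P') :
    sqHellinger P' P ≤ (P sᶜ).toReal := by
  have hac' := absolutelyContinuous_add_left P' P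
  have hac := absolutelyContinuous_add_right P' P
  have hdens : s.indicator (P.rnDeriv (P' + P)) ≤ᵐ[P' + P] P'.rnDeriv (P' + P) := by
    refine ae_le_of_forall_setLIntegral_le_of_sigmaFinite
      ((Measure.measurable_rnDeriv _ _).indicator hs) fun t ht _ => ?_
    rw [setLIntegral_indicator hs, Measure.setLIntegral_rnDeriv hac,
      Measure.setLIntegral_rnDeriv hac', Set.inter_comm, ← Measure.restrict_apply ht]
    exact hle t
  have ha : Integrable (fun o => (P'.rnDeriv (P' + P) o).toReal) (P' + P) :=
    Measure.integrable_toReal_rnDeriv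
  have hb : Integrable (fun o => (P.rnDeriv (P' + P) o).toReal) (P' + P) :=
    Measure.integrable_toReal_rnDeriv
  have hab : Integrable (fun o => (P'.rnDeriv (P' + P) o).toReal
      + (P.rnDeriv (P' + P) o).toReal) (P' + P) := ha.add hb
  have hbs := (hb.indicator hs).const_mul 2
  have hkey : ∫ o, (Real.sqrt ((P'.rnDeriv (P' + P)) o).toReal
      - Real.sqrt ((P.rnDeriv (P' + P)) o).toReal) ^ 2 ∂(P' + P) ≤
      ∫ o, ((P'.rnDeriv (P' + P) o).toReal + (P.rnDeriv (P' + P) o).toReal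
        - 2 * s.indicator (fun o => (P.rnDeriv (P' + P) o).toReal) o) ∂(P' + P) := by
    refine integral_mono_ae (integrable_sqHellinger_integrand P' P) (hab.sub hbs) ?_
    filter_upwards [hdens, Measure.rnDeriv_ne_top P' (P' + P)] with o ho htop
    have h1 : 0 ≤ (P'.rnDeriv (P' + P) o).toReal := ENNReal.toReal_nonneg
    have h2 : 0 ≤ (P.rnDeriv (P' + P) o).toReal := ENNReal.toReal_nonneg
    by_cases hos : o ∈ s
    · rw [Set.indicator_of_mem hos] at ho
      have h3 := Real.sqrt_le_sqrt (ENNReal.toReal_mono htop ho)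
      rw [Set.indicator_of_mem hos]
      nlinarith [Real.sq_sqrt h1, Real.sq_sqrt h2,
        mul_le_mul_of_nonneg_right h3 (Real.sqrt_nonneg (P.rnDeriv (P' + P) o).toReal)]
    · rw [Set.indicator_of_notMem hos]
      nlinarith [Real.sq_sqrt h1, Real.sq_sqrt h2,
        mul_nonneg (Real.sqrt_nonneg (P'.rnDeriv (P' + P) o).toReal)
          (Real.sqrt_nonneg (P.rnDeriv (P' + P) o).toReal)]
  rw [integral_sub hab hbs, integral_add ha hb, integral_const_mul,
    integral_indicator hs, Measure.integral_toReal_rnDeriv hac',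
    Measure.integral_toReal_rnDeriv hac, Measure.setIntegral_toReal_rnDeriv hac,
    probReal_univ, probReal_univ] at hkey
  have hcompl : (P sᶜ).toReal = 1 - P.real s := probReal_compl_eq_one_sub hs
  rw [hcompl]
  unfold sqHellinger
  linarith

lemma exists_restrict_le {O : Type*} [MeasurableSpace O] (P : Measure O)
    [IsProbabilityMeasure P] {s : Set O}
    (hne : ∃ P' : Measure O, IsProbabilityMeasure P' ∧ P' s = 1) :
    ∃ P' : Measure O, IsProbabilityMeasure P' ∧ P' s = 1 ∧ P.restrict s ≤ P' := by
  by_cases hp : P s = 0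
  · obtain ⟨P', h1, h2⟩ := hne
    refine ⟨P', h1, h2, ?_⟩
    rw [Measure.restrict_eq_zero.2 hp]
    exact Measure.zero_le _
  · refine ⟨ProbabilityTheory.cond P s, ProbabilityTheory.cond_isProbabilityMeasure hp,
      ProbabilityTheory.cond_apply_self hp (measure_ne_top P s), ?_⟩
    refine Measure.le_iff.2 fun t _ => ?_
    rw [ProbabilityTheory.cond, Measure.smul_apply, smul_eq_mul]
    exact le_mul_of_one_le_left' (ENNReal.one_le_inv.2 prob_le_one)

/-- **Hellinger distance to restricted supports.** For a probability measure `P` on `O` and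
a measurable set `O₀ ⊆ O` supporting at least one probability measure,
`(1/2) P(O \ O₀) ≤ inf { D_H²(P', P) : P' a probability measure with P'(O₀) = 1 } ≤ P(O \ O₀)`. -/
theorem hellinger_dist_restricted_support
    {O : Type*} [MeasurableSpace O] (P : Measure O) [IsProbabilityMeasure P]
    (O₀ : Set O) (hO₀ : MeasurableSet O₀)
    (hne : ∃ P' : Measure O, IsProbabilityMeasure P' ∧ P' O₀ = 1) :
    (1 / 2) * (P O₀ᶜ).toReal ≤
        sInf {x : ℝ | ∃ P' : Measure O, IsProbabilityMeasure P' ∧ P' O₀ = 1 ∧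
          x = sqHellinger P' P} ∧
      sInf {x : ℝ | ∃ P' : Measure O, IsProbabilityMeasure P' ∧ P' O₀ = 1 ∧
          x = sqHellinger P' P} ≤ (P O₀ᶜ).toReal := by
  constructor
  · obtain ⟨Q, hQ, hQ1⟩ := hne
    -- Nonemptiness matters: `sInf ∅ = 0` in `ℝ`.
    refine le_csInf ⟨_, Q, hQ, hQ1, rfl⟩ ?_
    rintro x ⟨P', hP', h1, rfl⟩
    exact half_le_sqHellinger P' P hO₀.compl ((prob_compl_eq_zero_iff hO₀).2 h1)
  · obtain ⟨P', hP', h1, hle⟩ := exists_restrict_le P hne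
    refine le_trans (csInf_le ?_ ⟨P', hP', h1, rfl⟩)
      (sqHellinger_le_of_restrict_le P' P hO₀ hle)
    refine ⟨0, ?_⟩
    rintro x ⟨Q, -, -, rfl⟩
    exact mul_nonneg (by norm_num) (integral_nonneg fun o => sq_nonneg _)
end

section
/- Variational characterization of the Bhattacharyya coefficient with bounded test functions: Let Ψ be a countable set, let P, Q be probability distributions on Ψ, and define I_B(P,Q) := Σ_{ψ∈Ψ} √(P(ψ)·Q(ψ)). Then for every A > 0: I_B(P,Q)² ≤ inf{ (E_{ψ∼P} e^{f(ψ)})·(E_{ψ∼Q} e^{−f(ψ)}) : f : Ψ → ℝ with sup_ψ |f(ψ)| ≤ A } ≤ I_B(P,Q)² + 3·e^{−A}. -/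
/-!
The lower bound is Cauchy–Schwarz applied to `√(PQ) = √(P e^f) √(Q e^{-f})`.

Without the bound on `f`, the infimum would be approached by `e^f = √(Q/P)`. For the upper bound
this choice is truncated to `[-A, A]`; `exists_truncated_tilt` shows that truncation costs at most
`P e^{-A}` in the first sum and `Q e^{-A}` in the second, pointwise. After summation the product
is at most `(I + e^{-A})² ≤ I² + 3 e^{-A}`, where `I ≤ 1` is the Bhattacharyya coefficient.
-/

/-- The truncation of `½ log (q / p)` to `[-A, A]`, including the degenerate cases where `p` or
`q` vanishes. -/
lemma exists_truncated_tilt (p q A : ℝ) (hp : 0 ≤ p) (hq : 0 ≤ q) (hA : 0 < A) :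
    ∃ f : ℝ, |f| ≤ A ∧ p * Real.exp f ≤ √(p * q) + p * Real.exp (-A) ∧
      q * Real.exp (-f) ≤ √(p * q) + q * Real.exp (-A) := by
  obtain ⟨a, ha, rfl⟩ : ∃ a : ℝ, 0 ≤ a ∧ p = a ^ 2 := ⟨√p, Real.sqrt_nonneg _, by simp [hp]⟩
  obtain ⟨b, hb, rfl⟩ : ∃ b : ℝ, 0 ≤ b ∧ q = b ^ 2 := ⟨√q, Real.sqrt_nonneg _, by simp [hq]⟩
  rw [← mul_pow, Real.sqrt_sq (by positivity)]
  have hE := Real.exp_pos A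
  have hF := Real.exp_pos (-A)
  have hab : 0 ≤ a * b := by positivity
  by_cases h1 : b * Real.exp A ≤ a
  · refine ⟨-A, by rw [abs_neg, abs_of_pos hA], by linarith, ?_⟩
    rw [neg_neg]
    have : b * (b * Real.exp A) ≤ b * a := mul_le_mul_of_nonneg_left h1 hb
    nlinarith [mul_nonneg hq hF.le]
  by_cases h2 : a * Real.exp A ≤ b
  · refine ⟨A, by rw [abs_of_pos hA], ?_, by linarith⟩
    have : a * (a * Real.exp A) ≤ a * b := mul_le_mul_of_nonneg_left h2 ha
    nlinarith [mul_nonneg hp hF.le]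
  push Not at h1 h2
  have ha' : 0 < a := by
    rcases ha.eq_or_lt with h | h
    · subst h
      linarith
    · exact h
  have hb' : 0 < b := by
    rcases hb.eq_or_lt with h | h
    · subst h
      linarith
    · exact h
  refine ⟨Real.log (b / a), ?_, ?_, ?_⟩
  · rw [abs_le, Real.le_log_iff_exp_le (by positivity), Real.log_le_iff_le_exp (by positivity),
      Real.exp_neg, le_div_iff₀ ha', div_le_iff₀ ha', inv_mul_le_iff₀ hE]
    constructor <;> nlinarith
  · rw [Real.exp_log (by positivity)]
    have : a ^ 2 * (b / a) = a * b := by field_simp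
    nlinarith [mul_nonneg hp hF.le]
  · rw [Real.exp_neg, Real.exp_log (by positivity)]
    have : b ^ 2 * (b / a)⁻¹ = a * b := by field_simp
    nlinarith [mul_nonneg hq hF.le]

lemma pmf_summable_toReal {Ψ : Type*} (P : PMF Ψ) : Summable fun ψ => (P ψ).toReal :=
  ENNReal.summable_toReal P.tsum_coe_ne_top

lemma pmf_tsum_toReal {Ψ : Type*} (P : PMF Ψ) : ∑' ψ, (P ψ).toReal = 1 := by
  rw [← ENNReal.tsum_toReal_eq P.apply_ne_top, P.tsum_coe, ENNReal.toReal_one]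

lemma pmf_summable_mul_exp {Ψ : Type*} (P : PMF Ψ) (f : Ψ → ℝ) (A : ℝ) (hf : ∀ ψ, f ψ ≤ A) :
    Summable fun ψ => (P ψ).toReal * Real.exp (f ψ) :=
  Summable.of_nonneg_of_le (fun _ => by positivity)
    (fun ψ => mul_le_mul_of_nonneg_left (Real.exp_le_exp.2 (hf ψ)) ENNReal.toReal_nonneg)
    ((pmf_summable_toReal P).mul_right (Real.exp A))

lemma pmf_summable_sqrt {Ψ : Type*} (P Q : PMF Ψ) :
    Summable fun ψ => √((P ψ).toReal * (Q ψ).toReal) := by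
  refine Summable.of_nonneg_of_le (fun _ => Real.sqrt_nonneg _) (fun ψ => ?_)
    ((pmf_summable_toReal P).add (pmf_summable_toReal Q))
  have hp : 0 ≤ (P ψ).toReal := ENNReal.toReal_nonneg
  have hq : 0 ≤ (Q ψ).toReal := ENNReal.toReal_nonneg
  rw [Real.sqrt_le_left (by positivity)]
  nlinarith

lemma bhattacharyya_sq_le {Ψ : Type*} (P Q : PMF Ψ) (f : Ψ → ℝ) (A : ℝ)
    (hf : ∀ ψ, |f ψ| ≤ A) :
    (∑' ψ, √((P ψ).toReal * (Q ψ).toReal)) ^ 2 ≤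
      (∑' ψ, (P ψ).toReal * Real.exp (f ψ)) * (∑' ψ, (Q ψ).toReal * Real.exp (-f ψ)) := by
  have hP := pmf_summable_mul_exp P f A fun ψ => (abs_le.1 (hf ψ)).2
  have hQ := pmf_summable_mul_exp Q (fun ψ => -f ψ) A fun ψ => by linarith [(abs_le.1 (hf ψ)).1]
  have hP0 : ∀ ψ, 0 ≤ (P ψ).toReal * Real.exp (f ψ) := fun _ => by positivity
  have hQ0 : ∀ ψ, 0 ≤ (Q ψ).toReal * Real.exp (-f ψ) := fun _ => by positivity
  have hle : ∑' ψ, √((P ψ).toReal * (Q ψ).toReal) ≤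
      √(∑' ψ, (P ψ).toReal * Real.exp (f ψ)) * √(∑' ψ, (Q ψ).toReal * Real.exp (-f ψ)) := by
    refine Real.tsum_le_of_sum_le (fun _ => Real.sqrt_nonneg _) fun s => ?_
    calc ∑ ψ ∈ s, √((P ψ).toReal * (Q ψ).toReal)
        = ∑ ψ ∈ s, √((P ψ).toReal * Real.exp (f ψ)) * √((Q ψ).toReal * Real.exp (-f ψ)) := by
          refine Finset.sum_congr rfl fun ψ _ => ?_
          rw [← Real.sqrt_mul (hP0 ψ), Real.exp_neg]
          congr 1
          field_simp
      _ ≤ √(∑ ψ ∈ s, (P ψ).toReal * Real.exp (f ψ)) *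
            √(∑ ψ ∈ s, (Q ψ).toReal * Real.exp (-f ψ)) :=
          Real.sum_sqrt_mul_sqrt_le s hP0 hQ0
      _ ≤ _ := by
          gcongr
          · exact hP.sum_le_tsum s fun ψ _ => hP0 ψ
          · exact hQ.sum_le_tsum s fun ψ _ => hQ0 ψ
  calc _ ≤ _ := pow_le_pow_left₀ (tsum_nonneg fun _ => Real.sqrt_nonneg _) hle 2
    _ = _ := by rw [mul_pow, Real.sq_sqrt (tsum_nonneg hP0), Real.sq_sqrt (tsum_nonneg hQ0)]

/-- **Variational characterization of the Bhattacharyya coefficient with bounded test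
functions.** For probability distributions `P, Q` on a countable set `Ψ`, writing
`I_B(P,Q) := Σ_ψ √(P(ψ) Q(ψ))`, one has, for every `A > 0`,
`I_B(P,Q)² ≤ inf { (E_P e^f)(E_Q e^{−f}) : sup|f| ≤ A } ≤ I_B(P,Q)² + 3 e^{−A}`. -/
theorem bhattacharyya_variational {Ψ : Type*} [Countable Ψ]
    (P Q : PMF Ψ) (A : ℝ) (hA : 0 < A) :
    (∑' ψ, Real.sqrt ((P ψ).toReal * (Q ψ).toReal)) ^ 2 ≤
        sInf {v : ℝ | ∃ f : Ψ → ℝ, (∀ ψ, |f ψ| ≤ A) ∧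
          v = (∑' ψ, (P ψ).toReal * Real.exp (f ψ)) *
              (∑' ψ, (Q ψ).toReal * Real.exp (-f ψ))} ∧
      sInf {v : ℝ | ∃ f : Ψ → ℝ, (∀ ψ, |f ψ| ≤ A) ∧
          v = (∑' ψ, (P ψ).toReal * Real.exp (f ψ)) *
              (∑' ψ, (Q ψ).toReal * Real.exp (-f ψ))} ≤
        (∑' ψ, Real.sqrt ((P ψ).toReal * (Q ψ).toReal)) ^ 2 + 3 * Real.exp (-A) := by
  constructor
  · refine le_csInf ⟨_, fun _ => 0, fun _ => by simpa using hA.le, rfl⟩ ?_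
    rintro v ⟨f, hf, rfl⟩
    exact bhattacharyya_sq_le P Q f A hf
  · choose f hf hfP hfQ using fun ψ => exists_truncated_tilt (P ψ).toReal (Q ψ).toReal A
      ENNReal.toReal_nonneg ENNReal.toReal_nonneg hA
    refine csInf_le_of_le ⟨0, ?_⟩ ⟨f, hf, rfl⟩ ?_
    · rintro v ⟨g, hg, rfl⟩
      exact (sq_nonneg _).trans (bhattacharyya_sq_le P Q g A hg)
    have hP := pmf_summable_mul_exp P f A fun ψ => (abs_le.1 (hf ψ)).2
    have hQ := pmf_summable_mul_exp Q (fun ψ => -f ψ) A fun ψ => by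
      linarith [(abs_le.1 (hf ψ)).1]
    have hI := pmf_summable_sqrt P Q
    have hPs := (pmf_summable_toReal P).mul_right (Real.exp (-A))
    have hQs := (pmf_summable_toReal Q).mul_right (Real.exp (-A))
    have hP_le := hP.tsum_le_tsum hfP (hI.add hPs)
    have hQ_le := hQ.tsum_le_tsum hfQ (hI.add hQs)
    rw [hI.tsum_add hPs, tsum_mul_right, pmf_tsum_toReal, one_mul] at hP_le
    rw [hI.tsum_add hQs, tsum_mul_right, pmf_tsum_toReal, one_mul] at hQ_le
    have hQ0 : 0 ≤ ∑' ψ, (Q ψ).toReal * Real.exp (-f ψ) := tsum_nonneg fun _ => by positivity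
    have hI0 : 0 ≤ ∑' ψ, √((P ψ).toReal * (Q ψ).toReal) := tsum_nonneg fun _ => Real.sqrt_nonneg _
    -- The test function `0` gives `I ≤ 1`.
    have hI1 := bhattacharyya_sq_le P Q (fun _ => 0) 0 (by simp)
    simp only [neg_zero, Real.exp_zero, mul_one, pmf_tsum_toReal] at hI1
    set I := ∑' ψ, √((P ψ).toReal * (Q ψ).toReal)
    have hI1' : I ≤ 1 := by nlinarith
    have hE0 := Real.exp_pos (-A)
    have hE1 : Real.exp (-A) ≤ 1 := Real.exp_le_one_iff.2 (by linarith)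
    calc _ ≤ (I + Real.exp (-A)) * (I + Real.exp (-A)) :=
          mul_le_mul hP_le hQ_le hQ0 (by positivity)
      _ ≤ _ := by nlinarith
end

section
/- Posterior-Hellinger information inequality: Let O and Ψ be finite sets and let μ be a probability distribution over finitely many pairs (P, ψ), where each P is a probability distribution on O and ψ ∈ Ψ. Let 𝒫 denote the joint law of (o, ψ) obtained by drawing (P, ψ) ∼ μ and then o ∼ P. For each ψ in the support of the Ψ-marginal of μ let P_ψ := E_μ[P | ψ] (the conditional mixture of P given ψ), and let P̄ := E_μ[P] (the overall mixture). Then for every probability distribution w on Ψ: 4·E_{o∼𝒫}[ D_H²(𝒫(ψ = · | o), w) ] ≥ E_{ψ∼𝒫}[ D_H²(P_ψ, P̄) ]. -/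
/-!
Write `J ψ o` for the joint law, `m ψ` and `q o` for its marginals. Multiplying the weights into
the squares, the left side is `(1/2) Σ (√J - √(m q))²` and the right side is
`4 · (1/2) Σ (√J - √(w q))²`. For each `ψ`, insert `√(w q)` and use `(x + y)² ≤ 2x² + 2y²`
pointwise: since `Σ q = 1`, the extra term is `Σ_o (√(w q) - √(m q))² = (√w - √m)²`, which is at
most `Σ_o (√J - √(w q))²` by Cauchy–Schwarz (data processing for the Hellinger distance under
marginalising out `o`). Hence the constant `2 + 2 = 4`; the inequality holds for each `ψ`
separately (`sum_sq_sqrt_sub_le`).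
-/

/-- Squared Hellinger distance between two (sub)probability vectors on a finite set:
`D_H²(p, q) := (1/2) Σ_s (√(p s) − √(q s))²`. -/
noncomputable def hell2Fin {S : Type*} [Fintype S] (p q : S → ℝ) : ℝ :=
  (1 / 2) * ∑ s, (Real.sqrt (p s) - Real.sqrt (q s)) ^ 2

/-- Moves a weight `a` into a Hellinger term of the normalised value `x / a`; the hypothesis `h`
makes the junk value of `x / 0` harmless. -/
lemma mul_sq_sqrt_div_sub {a x y : ℝ} (ha : 0 ≤ a) (h : a = 0 → x = 0) :
    a * (√(x / a) - √y) ^ 2 = (√x - √(a * y)) ^ 2 := by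
  rcases eq_or_ne a 0 with h0 | h0
  · simp [h0, h h0]
  · have hx : √x = √a * √(x / a) := by
      rw [← Real.sqrt_mul ha, mul_div_cancel₀ _ h0]
    rw [hx, Real.sqrt_mul ha, ← mul_sub, mul_pow, Real.sq_sqrt ha]

/-- Data processing for the Hellinger distance: summing out `o` does not increase it. -/
lemma sq_sqrt_sub_le_sum {O : Type*} [Fintype O] (j q : O → ℝ) (hj : ∀ o, 0 ≤ j o)
    (hq : ∀ o, 0 ≤ q o) (hq1 : ∑ o, q o = 1) (v : ℝ) (hv : 0 ≤ v) :
    (√v - √(∑ o, j o)) ^ 2 ≤ ∑ o, (√(j o) - √(q o * v)) ^ 2 := by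
  have hcs : ∑ o, √(j o) * √(q o) ≤ √(∑ o, j o) := by
    have h := Real.sum_sqrt_mul_sqrt_le Finset.univ hj hq
    rwa [hq1, Real.sqrt_one, mul_one] at h
  have hexp : ∑ o, (√(j o) - √(q o * v)) ^ 2
      = ∑ o, j o + v - 2 * √v * ∑ o, √(j o) * √(q o) := by
    have : ∀ o, (√(j o) - √(q o * v)) ^ 2
        = j o + q o * v - 2 * √v * (√(j o) * √(q o)) := fun o => by
      rw [sub_sq, Real.sq_sqrt (hj o), Real.sq_sqrt (mul_nonneg (hq o) hv),
        Real.sqrt_mul (hq o)]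
      ring
    simp only [this, Finset.sum_sub_distrib, Finset.sum_add_distrib, ← Finset.sum_mul,
      ← Finset.mul_sum, hq1, one_mul]
  rw [hexp, sub_sq, Real.sq_sqrt hv, Real.sq_sqrt (Finset.sum_nonneg fun o _ => hj o)]
  nlinarith [mul_le_mul_of_nonneg_left hcs (Real.sqrt_nonneg v)]

/-- The inequality for a single label: `j` is the row of the joint law, `q` the law of `o`, and
`v` the mass which the reference distribution gives to the label. -/
lemma sum_sq_sqrt_sub_le {O : Type*} [Fintype O] (j q : O → ℝ) (hj : ∀ o, 0 ≤ j o)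
    (hq : ∀ o, 0 ≤ q o) (hq1 : ∑ o, q o = 1) (v : ℝ) (hv : 0 ≤ v) :
    ∑ o, (√(j o) - √((∑ o, j o) * q o)) ^ 2 ≤ 4 * ∑ o, (√(j o) - √(q o * v)) ^ 2 := by
  have hstep : ∀ o, (√(j o) - √((∑ o, j o) * q o)) ^ 2
      ≤ 2 * (√(j o) - √(q o * v)) ^ 2 + 2 * (q o * (√v - √(∑ o, j o)) ^ 2) := fun o => by
    have hmid : q o * (√v - √(∑ o, j o)) ^ 2
        = (√(q o * v) - √((∑ o, j o) * q o)) ^ 2 := by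
      rw [mul_comm (∑ o, j o), Real.sqrt_mul (hq o), Real.sqrt_mul (hq o), ← mul_sub, mul_pow,
        Real.sq_sqrt (hq o)]
    rw [hmid]
    nlinarith [sq_nonneg ((√(j o) - √(q o * v)) - (√(q o * v) - √((∑ o, j o) * q o)))]
  have hsum := Finset.sum_le_sum fun o (_ : o ∈ Finset.univ) => hstep o
  rw [Finset.sum_add_distrib, ← Finset.mul_sum, ← Finset.mul_sum, ← Finset.sum_mul, hq1,
    one_mul] at hsum
  linarith [sq_sqrt_sub_le_sum j q hj hq hq1 v hv]

/-- **Posterior-Hellinger information inequality.** Let `μ` be a probability distribution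
over finitely many pairs `(P, ψ)` (encoded by a finite index type `I`, weights `μ`, models
`P i ∈ Δ(O)` and labels `lab i ∈ Ψ`), and let `𝒫` be the joint law of `(o, ψ)` obtained by
drawing `(P, ψ) ∼ μ` and then `o ∼ P`.  Writing `P_ψ := E_μ[P | ψ]` and `P̄ := E_μ[P]`, one
has, for every probability vector `w` on `Ψ`:
`4 E_{o∼𝒫}[ D_H²(𝒫(ψ = ·|o), w) ] ≥ E_{ψ∼𝒫}[ D_H²(P_ψ, P̄) ]`. -/
theorem posterior_hellinger_information
    {O Ψ I : Type*} [Fintype O] [Fintype Ψ] [Fintype I] [DecidableEq Ψ]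
    (μ : I → ℝ) (hμ0 : ∀ i, 0 ≤ μ i) (hμ1 : ∑ i, μ i = 1)
    (P : I → O → ℝ) (hP0 : ∀ i o, 0 ≤ P i o) (hP1 : ∀ i, ∑ o, P i o = 1)
    (lab : I → Ψ)
    (w : Ψ → ℝ) (hw0 : ∀ ψ, 0 ≤ w ψ) (hw1 : ∑ ψ, w ψ = 1) :
    ∑ ψ0 : Ψ, (∑ i, if lab i = ψ0 then μ i else 0) *
        hell2Fin (fun o => (∑ i, if lab i = ψ0 then μ i * P i o else 0) /
            (∑ i, if lab i = ψ0 then μ i else 0)) (fun o => ∑ i, μ i * P i o) ≤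
      4 * ∑ o : O, (∑ i, μ i * P i o) *
          hell2Fin (fun ψ0 => (∑ i, if lab i = ψ0 then μ i * P i o else 0) /
              (∑ i, μ i * P i o)) w := by
  set J : Ψ → O → ℝ := fun ψ o => ∑ i, if lab i = ψ then μ i * P i o else 0 with hJ
  set m : Ψ → ℝ := fun ψ => ∑ i, if lab i = ψ then μ i else 0 with hm
  set q : O → ℝ := fun o => ∑ i, μ i * P i o with hq
  have hJ0 : ∀ ψ o, 0 ≤ J ψ o := fun ψ o => Finset.sum_nonneg fun i _ => by
    split_ifs
    exacts [mul_nonneg (hμ0 i) (hP0 i o), le_rfl]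
  have hq0 : ∀ o, 0 ≤ q o := fun o =>
    Finset.sum_nonneg fun i _ => mul_nonneg (hμ0 i) (hP0 i o)
  have hJm : ∀ ψ, ∑ o, J ψ o = m ψ := fun ψ => by
    simp only [hJ, hm]
    rw [Finset.sum_comm]
    refine Finset.sum_congr rfl fun i _ => ?_
    split_ifs <;> simp [← Finset.mul_sum, hP1]
  have hJq : ∀ o, ∑ ψ, J ψ o = q o := fun o => by
    simp only [hJ, hq]
    rw [Finset.sum_comm]
    simp
  have hq1 : ∑ o, q o = 1 := by
    simp only [hq]
    rw [Finset.sum_comm]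
    simp [← Finset.mul_sum, hP1, hμ1]
  have hm0 : ∀ ψ, 0 ≤ m ψ := fun ψ => hJm ψ ▸ Finset.sum_nonneg fun o _ => hJ0 ψ o
  -- The joint law vanishes wherever one of its marginals does.
  have hmz : ∀ ψ o, m ψ = 0 → J ψ o = 0 := fun ψ o h =>
    le_antisymm (h ▸ hJm ψ ▸ Finset.single_le_sum (fun o _ => hJ0 ψ o) (Finset.mem_univ o))
      (hJ0 ψ o)
  have hqz : ∀ ψ o, q o = 0 → J ψ o = 0 := fun ψ o h =>
    le_antisymm (h ▸ hJq o ▸ Finset.single_le_sum (fun ψ _ => hJ0 ψ o) (Finset.mem_univ ψ))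
      (hJ0 ψ o)
  have hL : ∀ ψ, m ψ * hell2Fin (fun o => J ψ o / m ψ) q
      = (1 / 2) * ∑ o, (√(J ψ o) - √((∑ o, J ψ o) * q o)) ^ 2 := fun ψ => by
    rw [hell2Fin, mul_left_comm, Finset.mul_sum, hJm]
    simp only [mul_sq_sqrt_div_sub (hm0 ψ) (hmz ψ _)]
  have hR : ∀ o, q o * hell2Fin (fun ψ => J ψ o / q o) w
      = (1 / 2) * ∑ ψ, (√(J ψ o) - √(q o * w ψ)) ^ 2 := fun o => by
    rw [hell2Fin, mul_left_comm, Finset.mul_sum]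
    simp only [mul_sq_sqrt_div_sub (hq0 o) (hqz _ o)]
  change ∑ ψ, m ψ * hell2Fin (fun o => J ψ o / m ψ) q
    ≤ 4 * ∑ o, q o * hell2Fin (fun ψ => J ψ o / q o) w
  simp only [hL, hR, ← Finset.mul_sum]
  rw [Finset.sum_comm (s := (Finset.univ : Finset O)), mul_left_comm]
  refine mul_le_mul_of_nonneg_left ?_ (by norm_num)
  rw [Finset.mul_sum]
  refine Finset.sum_le_sum fun ψ _ => ?_
  exact sum_sq_sqrt_sub_le (J ψ) q (hJ0 ψ) hq0 hq1 (w ψ) (hw0 ψ)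
end

section
/- Existence of a normalizing positive-definite matrix (fixed-point lemma): Let d ≥ 1, λ₀ > 0, and let ν̄ be a Borel probability measure on ℝ^d supported on { x : ‖x‖ ≤ 1 and x ≠ 0 }. Then there exists a symmetric positive-definite matrix U ∈ ℝ^{d×d} satisfying E_{x∼ν̄}[ U x x^⊤ U / ‖Ux‖ ] + λ₀·U = I_d. In particular, taking traces, E_{x∼ν̄} ‖Ux‖ ≤ d. -/
/-!
The matrix is obtained variationally. The function `log det U - E‖Ux‖ - λ tr U` is considered on
the positive definite cone; its exponential `potential` extends continuously to the positive
semidefinite cone, vanishes on singular matrices and decays at infinity, so it attains its maximum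
at a positive definite `U` (`exists_isMax_potential`).

With `P = E[U x xᵀ U / ‖Ux‖]`, differentiating in a symmetric direction `H` gives
`tr (H U⁻¹) = tr (H U⁻¹ P) + λ tr H` (`stationary`), that is, `tr (H U⁻¹ R) = 0` for the residual
`R = 1 - P - λ U`. The residual is symmetric, so `H = R` is allowed; then `tr (R U⁻¹ R) = 0`
with `U⁻¹` positive definite, which forces `R = 0`. Taking traces in `P + λ U = 1` gives the bound
on `E‖Ux‖ = tr P`.
-/

open MeasureTheory

/-- The Euclidean norm on `ℝ^d` (vectors represented as `Fin d → ℝ`). -/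
noncomputable def euclNorm {d : ℕ} (v : Fin d → ℝ) : ℝ := Real.sqrt (∑ i, v i ^ 2)

open Matrix Filter Topology

/-! ### The Euclidean norm and its derivative along a quadratic curve -/

section EuclNorm

variable {d : ℕ}

lemma euclNorm_eq (v : Fin d → ℝ) : euclNorm v = ‖WithLp.toLp 2 v‖ := by
  simp [euclNorm, EuclideanSpace.norm_eq]

lemma euclNorm_nonneg (v : Fin d → ℝ) : 0 ≤ euclNorm v := Real.sqrt_nonneg _

lemma euclNorm_add_le (v w : Fin d → ℝ) : euclNorm (v + w) ≤ euclNorm v + euclNorm w := by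
  simp only [euclNorm_eq, WithLp.toLp_add]
  exact norm_add_le _ _

lemma euclNorm_smul (c : ℝ) (v : Fin d → ℝ) : euclNorm (c • v) = |c| * euclNorm v := by
  simp only [euclNorm_eq, WithLp.toLp_smul, norm_smul, Real.norm_eq_abs]

lemma abs_euclNorm_sub_le (v w : Fin d → ℝ) :
    |euclNorm v - euclNorm w| ≤ euclNorm (v - w) := by
  simp only [euclNorm_eq, WithLp.toLp_sub]
  exact abs_norm_sub_norm_le _ _

lemma abs_apply_le_euclNorm (v : Fin d → ℝ) (i : Fin d) : |v i| ≤ euclNorm v :=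
  Real.abs_le_sqrt (Finset.single_le_sum (f := fun i => v i ^ 2)
    (fun i _ => sq_nonneg (v i)) (Finset.mem_univ i))

lemma euclNorm_sq (v : Fin d → ℝ) : euclNorm v ^ 2 = ∑ i, v i ^ 2 :=
  Real.sq_sqrt (Finset.sum_nonneg fun i _ => sq_nonneg (v i))

lemma euclNorm_pos {v : Fin d → ℝ} (hv : v ≠ 0) : 0 < euclNorm v := by
  rw [euclNorm_eq, norm_pos_iff]
  simpa using hv

@[fun_prop]
lemma continuous_euclNorm : Continuous (euclNorm : (Fin d → ℝ) → ℝ) := by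
  unfold euclNorm
  fun_prop

/-- The Frobenius norm of a matrix, used as a Lipschitz constant of `x ↦ W x`. -/
noncomputable def frob (W : Matrix (Fin d) (Fin d) ℝ) : ℝ := Real.sqrt (∑ i, ∑ j, W i j ^ 2)

lemma frob_nonneg (W : Matrix (Fin d) (Fin d) ℝ) : 0 ≤ frob W := Real.sqrt_nonneg _

@[fun_prop]
lemma continuous_frob : Continuous (frob : Matrix (Fin d) (Fin d) ℝ → ℝ) := by
  unfold frob
  fun_prop

lemma euclNorm_mulVec_le (W : Matrix (Fin d) (Fin d) ℝ) (x : Fin d → ℝ) :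
    euclNorm (W *ᵥ x) ≤ frob W * euclNorm x := by
  unfold euclNorm frob
  rw [← Real.sqrt_mul (by positivity), Finset.sum_mul]
  refine Real.sqrt_le_sqrt (Finset.sum_le_sum fun i _ => ?_)
  exact Finset.sum_mul_sq_le_sq_mul_sq Finset.univ (W i) x

lemma euclNorm_mulVec_le_frob (W : Matrix (Fin d) (Fin d) ℝ) {x : Fin d → ℝ}
    (hx : euclNorm x ≤ 1) : euclNorm (W *ᵥ x) ≤ frob W :=
  (euclNorm_mulVec_le W x).trans (mul_le_of_le_one_right (frob_nonneg W) hx)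

lemma hasDerivAt_euclNorm_curve {y r s : Fin d → ℝ} (hy : y ≠ 0) :
    HasDerivAt (fun t : ℝ => euclNorm (y + t • r + t ^ 2 • s)) (y ⬝ᵥ r / euclNorm y) 0 := by
  have h1 : HasDerivAt (fun t : ℝ => ∑ i, (y i + t * r i + t ^ 2 * s i) ^ 2)
      (∑ i, 2 * (y i * r i)) 0 := by
    refine HasDerivAt.fun_sum fun i _ => ?_
    have := ((((hasDerivAt_id (0 : ℝ)).mul_const (r i)).const_add (y i)).add
      (((hasDerivAt_id (0 : ℝ)).pow 2).mul_const (s i))).pow 2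
    refine this.congr_deriv ?_
    simp
    ring
  have hpos := euclNorm_pos hy
  have hne : (∑ i, (y i + 0 * r i + 0 ^ 2 * s i) ^ 2) ≠ 0 := by
    have : 0 < euclNorm y ^ 2 := by positivity
    rw [euclNorm_sq] at this
    simpa using this.ne'
  have h2 := h1.sqrt hne
  refine h2.congr_deriv ?_
  rw [← Finset.mul_sum]
  simp only [zero_mul, add_zero, ne_eq, OfNat.ofNat_ne_zero, not_false_eq_true, zero_pow]
  change 2 * (∑ i, y i * r i) / (2 * euclNorm y) = (∑ i, y i * r i) / euclNorm y
  rw [mul_div_mul_left _ _ two_ne_zero]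

end EuclNorm

/-! ### Positive semidefinite matrices and determinants -/

section PosSemidef

variable {d : ℕ}

lemma isClosed_posSemidef : IsClosed {U : Matrix (Fin d) (Fin d) ℝ | U.PosSemidef} := by
  simp only [posSemidef_iff_dotProduct_mulVec, Set.ofPred_and, Set.ofPred_forall]
  refine IsClosed.inter ?_ (isClosed_iInter fun x => ?_)
  · exact isClosed_eq (by fun_prop) continuous_id
  · exact isClosed_le continuous_const (by fun_prop)

lemma abs_apply_le_trace {U : Matrix (Fin d) (Fin d) ℝ} (hU : U.PosSemidef) (i j : Fin d) :
    |U i j| ≤ U.trace := by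
  have hdiag : ∀ k, U k k ≤ U.trace := fun k =>
    Finset.single_le_sum (f := fun k => U k k) (fun k _ => hU.diag_nonneg) (Finset.mem_univ k)
  have hsymm : U j i = U i j := by simpa using hU.isHermitian.apply i j
  have key : ∀ c : ℝ, 0 ≤ U i i + c * U i j + c * (U j i + c * U j j) := by
    intro c
    have := hU.dotProduct_mulVec_nonneg (Pi.single i 1 + Pi.single j c)
    simp [mulVec_add, add_dotProduct, dotProduct_add, mulVec_single] at this
    linarith
  have h1 := key 1
  have h2 := key (-1)
  have := hdiag i
  have := hdiag j
  rw [abs_le]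
  constructor <;> linarith

lemma det_le_trace_pow {U : Matrix (Fin d) (Fin d) ℝ} (hU : U.PosSemidef) :
    U.det ≤ U.trace ^ d := by
  rw [hU.1.det_eq_prod_eigenvalues, hU.1.trace_eq_sum_eigenvalues]
  simp only [RCLike.ofReal_real_eq_id, id]
  calc _ ≤ ∏ _i : Fin d, (∑ i, hU.1.eigenvalues i) :=
        Finset.prod_le_prod (fun i _ => hU.eigenvalues_nonneg i) fun i _ =>
          Finset.single_le_sum (fun i _ => hU.eigenvalues_nonneg i) (Finset.mem_univ i)
    _ = _ := by simp

lemma hasDerivAt_det_one_add (A : Matrix (Fin d) (Fin d) ℝ) :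
    HasDerivAt (fun t : ℝ => (1 + t • A).det) A.trace 0 := by
  rw [funext fun t : ℝ => det_one_add_smul t A]
  have h := (((hasDerivAt_id (0 : ℝ)).const_mul A.trace).const_add 1).add
    ((Polynomial.hasDerivAt (det (1 + (Polynomial.X : Polynomial ℝ) •
      A.map Polynomial.C)).divX.divX 0).mul ((hasDerivAt_id (0 : ℝ)).pow 2))
  refine h.congr_deriv ?_
  simp

lemma eq_zero_of_trace_mul_mul_eq_zero {V R : Matrix (Fin d) (Fin d) ℝ} (hV : V.PosDef)
    (hR : R.IsHermitian) (h : (R * V * R).trace = 0) : R = 0 := by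
  have hpsd : (Rᴴ * V * R).PosSemidef := hV.posSemidef.conjTranspose_mul_mul_same R
  rw [hR.eq] at hpsd
  have h0 : R * V * R = 0 := hpsd.trace_eq_zero_iff.mp h
  ext i j
  by_contra hne
  have hcol : R *ᵥ Pi.single j 1 ≠ 0 := fun hz => hne (by simpa using congrFun hz i)
  have hpos := hV.dotProduct_mulVec_pos hcol
  rw [star_mulVec, ← dotProduct_mulVec, hR.eq, mulVec_mulVec, mulVec_mulVec, h0] at hpos
  simp at hpos

end PosSemidef

/-! ### The potential and its maximiser -/

section Potential

variable {d : ℕ} {lam : ℝ} {ν : Measure (Fin d → ℝ)}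

/-- The functional `det U · exp (-E‖Ux‖ - λ tr U)`, the exponential of the concave function
`log det U - E‖Ux‖ - λ tr U`; unlike the latter it is continuous up to singular `U`. -/
noncomputable def potential (lam : ℝ) (ν : Measure (Fin d → ℝ))
    (U : Matrix (Fin d) (Fin d) ℝ) : ℝ :=
  U.det * Real.exp (-(∫ x, euclNorm (U *ᵥ x) ∂ν) - lam * U.trace)

lemma integrable_euclNorm_mulVec [IsFiniteMeasure ν] (hν : ∀ᵐ x ∂ν, euclNorm x ≤ 1)
    (U : Matrix (Fin d) (Fin d) ℝ) : Integrable (fun x => euclNorm (U *ᵥ x)) ν := by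
  refine Integrable.of_bound (Continuous.aestronglyMeasurable (by fun_prop)) (frob U) ?_
  filter_upwards [hν] with x hx
  rw [Real.norm_of_nonneg (euclNorm_nonneg _)]
  exact euclNorm_mulVec_le_frob U hx

lemma integrable_coord_mul_div [IsFiniteMeasure ν] (hν : ∀ᵐ x ∂ν, euclNorm x ≤ 1)
    (U : Matrix (Fin d) (Fin d) ℝ) (i j : Fin d) :
    Integrable (fun x => (U *ᵥ x) i * (U *ᵥ x) j / euclNorm (U *ᵥ x)) ν := by
  refine Integrable.of_bound (Measurable.aestronglyMeasurable ?_) (frob U) ?_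
  · exact Measurable.div (Continuous.measurable (by fun_prop))
      (Continuous.measurable (by fun_prop))
  filter_upwards [hν] with x hx
  refine le_trans ?_ (euclNorm_mulVec_le_frob U hx)
  have h0 := euclNorm_nonneg (U *ᵥ x)
  rw [norm_div, norm_mul, Real.norm_of_nonneg h0]
  refine div_le_of_le_mul₀ h0 h0 ?_
  exact mul_le_mul (abs_apply_le_euclNorm _ i) (abs_apply_le_euclNorm _ j) (abs_nonneg _) h0

lemma continuous_potential [IsFiniteMeasure ν] (hν : ∀ᵐ x ∂ν, euclNorm x ≤ 1) :
    Continuous (potential lam ν) := by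
  have hint : Continuous fun U : Matrix (Fin d) (Fin d) ℝ => ∫ x, euclNorm (U *ᵥ x) ∂ν := by
    rw [continuous_iff_continuousAt]
    intro U₀
    have : FirstCountableTopology (Matrix (Fin d) (Fin d) ℝ) :=
      inferInstanceAs (FirstCountableTopology (Fin d → Fin d → ℝ))
    refine continuousAt_of_dominated (bound := fun _ => frob U₀ + 1) ?_ ?_
      (integrable_const _) ?_
    · exact Eventually.of_forall fun U => Continuous.aestronglyMeasurable (by fun_prop)
    · have : ∀ᶠ U in 𝓝 U₀, frob U < frob U₀ + 1 :=
        continuous_frob.continuousAt.eventually_lt continuousAt_const (by linarith)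
      filter_upwards [this] with U hU
      filter_upwards [hν] with x hx
      rw [Real.norm_of_nonneg (euclNorm_nonneg _)]
      exact (euclNorm_mulVec_le_frob U hx).trans hU.le
    · exact Eventually.of_forall fun x => Continuous.continuousAt (by fun_prop)
  unfold potential
  fun_prop

lemma potential_le {U : Matrix (Fin d) (Fin d) ℝ} (hU : U.PosSemidef) :
    potential lam ν U ≤ U.trace ^ d * Real.exp (-lam * U.trace) := by
  unfold potential
  have h0 : 0 ≤ ∫ x, euclNorm (U *ᵥ x) ∂ν := integral_nonneg fun x => euclNorm_nonneg _
  gcongr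
  · exact pow_nonneg hU.trace_nonneg d
  · exact det_le_trace_pow hU
  · linarith

lemma potential_one_pos : 0 < potential lam ν 1 := by
  unfold potential
  rw [det_one, one_mul]
  exact Real.exp_pos _

/-- The potential attains its maximum over the positive semidefinite cone: it decays at
infinity because `det U ≤ (tr U)^d`, and all entries of `U` are bounded by `tr U`. -/
lemma exists_isMax_potential [IsFiniteMeasure ν] (hlam : 0 < lam)
    (hν : ∀ᵐ x ∂ν, euclNorm x ≤ 1) :
    ∃ U : Matrix (Fin d) (Fin d) ℝ, U.PosDef ∧
      ∀ V : Matrix (Fin d) (Fin d) ℝ, V.PosSemidef → potential lam ν V ≤ potential lam ν U := by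
  have hdecay := tendsto_rpow_mul_exp_neg_mul_atTop_nhds_zero d lam hlam
  simp only [Real.rpow_natCast] at hdecay
  obtain ⟨C, hC⟩ := eventually_atTop.mp
    (hdecay.eventually (gt_mem_nhds (potential_one_pos (d := d) (lam := lam) (ν := ν))))
  have htrace : ∀ V : Matrix (Fin d) (Fin d) ℝ, V.PosSemidef →
      potential lam ν 1 ≤ potential lam ν V → V.trace < C := by
    intro V hV hle
    by_contra! hge
    exact absurd (hle.trans (potential_le hV)) (not_le.mpr (hC _ hge))
  let K : Set (Matrix (Fin d) (Fin d) ℝ) :=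
    {U | U.PosSemidef} ∩ Set.pi Set.univ fun _ => Set.pi Set.univ fun _ => Set.Icc (-C) C
  have hK : IsCompact K :=
    IsCompact.inter_left (isCompact_univ_pi fun _ => isCompact_univ_pi fun _ => isCompact_Icc)
      isClosed_posSemidef
  have hmem : ∀ V : Matrix (Fin d) (Fin d) ℝ, V.PosSemidef →
      potential lam ν 1 ≤ potential lam ν V → V ∈ K := fun V hV hle =>
    ⟨hV, fun i _ j _ => abs_le.mp ((abs_apply_le_trace hV i j).trans (htrace V hV hle).le)⟩
  obtain ⟨U, hUK, hUmax⟩ := hK.exists_isMaxOn ⟨1, hmem 1 PosSemidef.one le_rfl⟩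
    (continuous_potential (lam := lam) hν).continuousOn
  have h1U : potential lam ν 1 ≤ potential lam ν U := hUmax (hmem 1 PosSemidef.one le_rfl)
  refine ⟨U, hUK.1.posDef_iff_det_ne_zero.mpr ?_, fun V hV => ?_⟩
  · intro hdet
    have := potential_one_pos.trans_le h1U
    simp [potential, hdet] at this
  · rcases le_total (potential lam ν 1) (potential lam ν V) with h | h
    · exact hUmax (hmem V hV h)
    · exact h.trans h1U

/-- Differentiation under the expectation: the integrand is Lipschitz in `t ∈ (-1, 1)` uniformly
in `‖x‖ ≤ 1`, and differentiable at `0` because `Ux ≠ 0` almost surely. -/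
lemma hasDerivAt_integral_curve [IsFiniteMeasure ν] (hν : ∀ᵐ x ∂ν, euclNorm x ≤ 1)
    (hν0 : ∀ᵐ x ∂ν, x ≠ 0) {U : Matrix (Fin d) (Fin d) ℝ} (hU : U.PosDef)
    (R S : Matrix (Fin d) (Fin d) ℝ) :
    HasDerivAt (fun t : ℝ => ∫ x, euclNorm ((U + t • R + t ^ 2 • S) *ᵥ x) ∂ν)
      (∫ x, (U *ᵥ x) ⬝ᵥ (R *ᵥ x) / euclNorm (U *ᵥ x) ∂ν) 0 := by
  have hexp : ∀ (t : ℝ) (x : Fin d → ℝ), (U + t • R + t ^ 2 • S) *ᵥ x =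
      U *ᵥ x + t • (R *ᵥ x) + t ^ 2 • (S *ᵥ x) := fun t x => by
    simp [add_mulVec, smul_mulVec]
  refine (hasDerivAt_integral_of_dominated_loc_of_lip (s := Metric.ball 0 1)
    (bound := fun _ => frob R + 2 * frob S) (Metric.ball_mem_nhds 0 one_pos) ?_ ?_ ?_ ?_
    (integrable_const _) ?_).2
  · exact Eventually.of_forall fun t => Continuous.aestronglyMeasurable (by fun_prop)
  · exact integrable_euclNorm_mulVec hν _
  · exact (Measurable.div (Continuous.measurable (by fun_prop))
      (Continuous.measurable (by fun_prop))).aestronglyMeasurable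
  · filter_upwards [hν] with x hx
    refine LipschitzOnWith.of_dist_le_mul fun t ht s hs => ?_
    rw [Real.coe_nnabs, abs_of_nonneg (add_nonneg (frob_nonneg R)
      (mul_nonneg zero_le_two (frob_nonneg S))), Real.dist_eq, Real.dist_eq]
    rw [mem_ball_zero_iff, Real.norm_eq_abs] at ht hs
    refine (abs_euclNorm_sub_le _ _).trans ?_
    have hdiff : (U + t • R + t ^ 2 • S) *ᵥ x - (U + s • R + s ^ 2 • S) *ᵥ x =
        (t - s) • (R *ᵥ x + (t + s) • (S *ᵥ x)) := by
      rw [hexp, hexp]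
      ext i
      simp
      ring
    rw [hdiff, euclNorm_smul, mul_comm]
    refine mul_le_mul_of_nonneg_right ?_ (abs_nonneg _)
    refine (euclNorm_add_le _ _).trans (add_le_add (euclNorm_mulVec_le_frob R hx) ?_)
    rw [euclNorm_smul]
    refine mul_le_mul ?_ (euclNorm_mulVec_le_frob S hx) (euclNorm_nonneg _) zero_le_two
    exact (abs_add_le t s).trans (by linarith)
  · filter_upwards [hν0] with x hx
    simp only [hexp]
    refine hasDerivAt_euclNorm_curve fun h => hx ?_
    exact (mulVec_injective_iff_isUnit.mpr hU.isUnit) (by simpa using h)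

/-! ### Stationarity at the maximiser -/

/-- The entrywise expectation `E[U x xᵀ U / ‖Ux‖]` for symmetric `U`. -/
noncomputable def secondMoment (ν : Measure (Fin d → ℝ)) (U : Matrix (Fin d) (Fin d) ℝ) :
    Matrix (Fin d) (Fin d) ℝ :=
  fun i j => ∫ x, (U *ᵥ x) i * (U *ᵥ x) j / euclNorm (U *ᵥ x) ∂ν

lemma integral_quadratic_div [IsFiniteMeasure ν] (hν : ∀ᵐ x ∂ν, euclNorm x ≤ 1)
    (U B : Matrix (Fin d) (Fin d) ℝ) :
    ∫ x, (U *ᵥ x) ⬝ᵥ (B *ᵥ (U *ᵥ x)) / euclNorm (U *ᵥ x) ∂ν =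
      (B * secondMoment ν U).trace := by
  have hpt : ∀ x, (U *ᵥ x) ⬝ᵥ (B *ᵥ (U *ᵥ x)) / euclNorm (U *ᵥ x) =
      ∑ i, ∑ j, B i j * ((U *ᵥ x) j * (U *ᵥ x) i / euclNorm (U *ᵥ x)) := by
    intro x
    generalize U *ᵥ x = y
    simp only [dotProduct, mulVec, Finset.sum_div, Finset.mul_sum]
    exact Finset.sum_congr rfl fun i _ => Finset.sum_congr rfl fun j _ => by ring
  simp only [hpt]
  have hint : ∀ i j, Integrable
      (fun x => B i j * ((U *ᵥ x) j * (U *ᵥ x) i / euclNorm (U *ᵥ x))) ν :=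
    fun i j => (integrable_coord_mul_div hν U j i).const_mul _
  rw [integral_finsetSum Finset.univ fun i _ =>
    integrable_finsetSum Finset.univ fun j _ => hint i j]
  refine Finset.sum_congr rfl fun i _ => ?_
  rw [integral_finsetSum Finset.univ fun j _ => hint i j]
  simp only [integral_const_mul]
  rfl

/-- The stationarity condition at a maximiser `U`, in the direction of a symmetric matrix `R`.
The test curve is `U_t = (1 + tA) U (1 + tA)ᵀ` with `A = R U⁻¹ / 2`: it is positive semidefinite
for every `t`, satisfies `U_t = U + tR + O(t²)`, and its determinant is `det U · det (1 + tA)²`. -/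
lemma stationary [IsFiniteMeasure ν] (hν : ∀ᵐ x ∂ν, euclNorm x ≤ 1)
    (hν0 : ∀ᵐ x ∂ν, x ≠ 0) {U : Matrix (Fin d) (Fin d) ℝ} (hU : U.PosDef)
    (hmax : ∀ V : Matrix (Fin d) (Fin d) ℝ, V.PosSemidef →
      potential lam ν V ≤ potential lam ν U)
    {R : Matrix (Fin d) (Fin d) ℝ} (hR : R.IsHermitian) :
    (R * U⁻¹).trace - (R * U⁻¹ * secondMoment ν U).trace - lam * R.trace = 0 := by
  have hdet : IsUnit U.det := (isUnit_iff_isUnit_det U).mp hU.isUnit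
  have hUt : Uᵀ = U := by simpa using hU.isHermitian.eq
  have hRt : Rᵀ = R := by simpa using hR.eq
  set A : Matrix (Fin d) (Fin d) ℝ := (1 / 2 : ℝ) • (R * U⁻¹) with hA
  have hAU : A * U = (1 / 2 : ℝ) • R := by
    rw [hA, smul_mul_assoc, nonsing_inv_mul_cancel_right _ _ hdet]
  have hUA : U * Aᵀ = (1 / 2 : ℝ) • R := by
    have := congrArg transpose hAU
    rwa [transpose_mul, hUt, transpose_smul (1 / 2 : ℝ) R, hRt] at this
  set S : Matrix (Fin d) (Fin d) ℝ := A * U * Aᵀ with hS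
  have hcurve : ∀ t : ℝ, (1 + t • A) * U * (1 + t • A)ᵀ = U + t • R + t ^ 2 • S := by
    intro t
    have hhalf : t • R = t • (A * U) + t • (U * Aᵀ) := by
      rw [hAU, hUA, ← smul_add, ← add_smul]
      norm_num
    rw [hhalf, hS]
    simp only [transpose_add, transpose_one, transpose_smul, add_mul, mul_add, one_mul, mul_one,
      smul_mul_assoc, mul_smul_comm, pow_two, smul_add, mul_smul]
    abel
  let f : ℝ → ℝ := fun t => (U.det * (1 + t • A).det ^ 2) *
    Real.exp (-(∫ x, euclNorm ((U + t • R + t ^ 2 • S) *ᵥ x) ∂ν) -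
      lam * (U.trace + t * R.trace + t ^ 2 * S.trace))
  have hf : ∀ t, f t = potential lam ν (U + t • R + t ^ 2 • S) := by
    intro t
    simp only [f, potential]
    congr 1
    · rw [← hcurve, det_mul, det_mul, det_transpose]
      ring
    · simp [trace_add, trace_smul]
  have hlocal : IsLocalMax f 0 := Eventually.of_forall fun t => by
    have h0 : f 0 = potential lam ν U := by simp [hf]
    rw [h0, hf, ← hcurve]
    refine hmax _ ?_
    simpa only [conjTranspose_eq_transpose_of_trivial] using
      hU.posSemidef.mul_mul_conjTranspose_same (1 + t • A)
  have htr : HasDerivAt (fun t : ℝ => U.trace + t * R.trace + t ^ 2 * S.trace) R.trace 0 := by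
    refine ((((hasDerivAt_id (0 : ℝ)).mul_const R.trace).const_add U.trace).add
      (((hasDerivAt_id (0 : ℝ)).pow 2).mul_const S.trace)).congr_deriv ?_
    simp
  have hfd := (((hasDerivAt_det_one_add A).pow 2).const_mul U.det).mul
    (((hasDerivAt_integral_curve hν hν0 hU R S).neg.sub (htr.const_mul lam)).exp)
  have hzero := hlocal.hasDerivAt_eq_zero hfd
  have hint : ∫ x, (U *ᵥ x) ⬝ᵥ (R *ᵥ x) / euclNorm (U *ᵥ x) ∂ν =
      (R * U⁻¹ * secondMoment ν U).trace := by
    rw [← integral_quadratic_div hν]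
    simp only [mulVec_mulVec, nonsing_inv_mul_cancel_right _ _ hdet]
  have hAtr : A.trace = (1 / 2) * (R * U⁻¹).trace := by simp [hA, trace_smul]
  rw [hint, hAtr] at hzero
  simp only [zero_smul, add_zero, det_one, Pi.pow_apply, Pi.sub_apply, Pi.neg_apply] at hzero
  -- The derivative is `det U * E > 0` times the claimed expression.
  set E := Real.exp _ with hE
  have hEpos : 0 < U.det * E := mul_pos hU.det_pos (Real.exp_pos _)
  refine (mul_eq_zero_iff_left hEpos.ne').mp ?_
  rw [← hzero]
  ring

end Potential

/-- **Existence of a normalizing positive-definite matrix (fixed-point lemma).**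
For `d ≥ 1`, `λ₀ > 0` and a Borel probability measure `ν̄` on `ℝ^d` supported on
`{x : ‖x‖ ≤ 1, x ≠ 0}`, there is a symmetric positive-definite matrix `U` with
`E_{x∼ν̄}[U x xᵀ U / ‖Ux‖] + λ₀ U = I_d` (entrywise); in particular (taking traces)
`E_{x∼ν̄} ‖Ux‖ ≤ d`. -/
theorem exists_normalizing_posdef_matrix
    (d : ℕ) (hd : 1 ≤ d) (lam : ℝ) (hlam : 0 < lam)
    (ν : Measure (Fin d → ℝ)) [IsProbabilityMeasure ν]
    (hsupp : ν {x | euclNorm x ≤ 1 ∧ x ≠ 0} = 1) :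
    ∃ U : Matrix (Fin d) (Fin d) ℝ, U.PosDef ∧
      (∀ i j : Fin d,
        (∫ x, U.mulVec x i * U.mulVec x j / euclNorm (U.mulVec x) ∂ν) + lam * U i j =
          (1 : Matrix (Fin d) (Fin d) ℝ) i j) ∧
      (∫ x, euclNorm (U.mulVec x) ∂ν) ≤ d := by
  have hmeas : MeasurableSet {x : Fin d → ℝ | euclNorm x ≤ 1 ∧ x ≠ 0} :=
    (measurableSet_le continuous_euclNorm.measurable measurable_const).inter
      (measurableSet_singleton 0).compl
  have hae : ∀ᵐ x ∂ν, euclNorm x ≤ 1 ∧ x ≠ 0 := by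
    rw [ae_iff]
    exact (prob_compl_eq_zero_iff hmeas).mpr hsupp
  have hν : ∀ᵐ x ∂ν, euclNorm x ≤ 1 := hae.mono fun _ h => h.1
  have hν0 : ∀ᵐ x ∂ν, x ≠ 0 := hae.mono fun _ h => h.2
  obtain ⟨U, hU, hmax⟩ := exists_isMax_potential (ν := ν) hlam hν
  have hdet : IsUnit U.det := (isUnit_iff_isUnit_det U).mp hU.isUnit
  set P := secondMoment ν U with hP
  have hPsymm : P.IsHermitian := by
    ext i j
    simp only [conjTranspose_apply, star_trivial, hP, secondMoment]
    simp only [mul_comm]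
  -- The residual is itself an admissible direction, and testing with it gives `tr (R U⁻¹ R) = 0`.
  set R : Matrix (Fin d) (Fin d) ℝ := 1 - P - lam • U with hRdef
  have hR : R.IsHermitian := by
    have h1 : (lam • U).IsHermitian := by
      rw [IsHermitian, conjTranspose_smul, hU.isHermitian.eq, star_trivial]
    exact (isHermitian_one.sub hPsymm).sub h1
  have hR0 : R = 0 := by
    refine eq_zero_of_trace_mul_mul_eq_zero hU.inv hR ?_
    rw [← stationary hν hν0 hU hmax hR]
    conv_lhs => rw [hRdef, mul_sub, mul_sub, ← hRdef]
    rw [mul_one, mul_smul_comm, nonsing_inv_mul_cancel_right _ _ hdet, trace_sub, trace_sub,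
      trace_smul, smul_eq_mul]
  have heq : P + lam • U = 1 := by
    rw [hRdef, sub_sub, sub_eq_zero] at hR0
    exact hR0.symm
  refine ⟨U, hU, fun i j => ?_, ?_⟩
  · rw [← heq]
    rfl
  · have hPtr : ∫ x, euclNorm (U *ᵥ x) ∂ν = P.trace := by
      have h := integral_quadratic_div hν U 1
      rw [one_mul] at h
      rw [hP, ← h]
      congr 1
      ext x
      have hsq : (U *ᵥ x) ⬝ᵥ (U *ᵥ x) = euclNorm (U *ᵥ x) * euclNorm (U *ᵥ x) := by
        rw [← pow_two, euclNorm_sq]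
        simp [dotProduct, pow_two]
      rw [one_mulVec, hsq, mul_self_div_self]
    have htr := congrArg trace heq
    rw [trace_add, trace_smul, trace_one, Fintype.card_fin, smul_eq_mul] at htr
    have := mul_nonneg hlam.le hU.posSemidef.trace_nonneg
    linarith
end

section
/- Quantile private PAC-DEC of two-point subclasses dominates the local DEC: Let Π be a decision space with measurable singletons, Z a measurable space, M a class of models M : Π → Δ(Z), L : M × Π → [0,∞) a loss, and M₀ ∈ M. Define the local DEC p-dec^{loc}_ε(M, M₀) := sup{ inf_{π∈Π} ( L(M₁,π) + L(M₀,π) ) : M₁ ∈ M, sup_{π∈Π} D_TV( M₁(π), M₀(π) ) ≤ ε }. Then for every ε > 0: sup_{M₁∈M} p-dec^{q,LDP}_{ε, 1/2}( {M₁, M₀}, M₀ ) ≥ (1/2)·p-dec^{loc}_ε(M, M₀). -/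
/-!
Fix `M₁` with `sup_π D_TV(M₁(π), M₀(π)) ≤ ε` and any `p`, `q`. Both models of `{M₁, M₀}` meet the
constraint: `M₀` trivially, and `M₁` because `D_ℓ ≤ D_TV` for every `[0,1]`-valued test `ℓ`
(`Dl_le_TVdist`, by the layer-cake formula). With `c = inf_π (L(M₁,π) + L(M₀,π))`, every `π` has
`L(M₁,π) ≥ c/2` or `L(M₀,π) ≥ c/2`, so by subadditivity one of these two events has
`p`-probability at least `1/2`, and the corresponding quantile loss is at least `c/2`
(`half_le_quantileLoss_or`).
-/


open MeasureTheory
open scoped ENNReal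

/-- A distribution `q ∈ Δ(Θ × L)` over pairs of a decision and a measurable `[0,1]`-valued
test function on `Z`. -/
def IsTestDist {Θ Z : Type*} [MeasurableSpace Θ] [MeasurableSpace Z]
    (q : Measure (Θ × (Z → ℝ))) : Prop :=
  IsProbabilityMeasure q ∧
    q {pl | Measurable pl.2 ∧ ∀ z, pl.2 z ∈ Set.Icc (0 : ℝ) 1} = 1

/-- `E_{(π,ℓ)∼q} D_ℓ(M_i(π), M̄(π))²`. -/
noncomputable def testErr {Θ Z ι : Type*} [MeasurableSpace Θ] [MeasurableSpace Z]
    (Ms : ι → Θ → Measure Z) (Mb : Θ → Measure Z)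
    (q : Measure (Θ × (Z → ℝ))) (i : ι) : ℝ :=
  ∫ pl, (Dl pl.2 (Ms i pl.1) (Mb pl.1)) ^ 2 ∂q

/-- The private PAC-DEC of the model class `(Ms i)_{i : ι}` with loss `loss` and reference
model `Mb`:
`p-dec^{LDP}_ε(M, M̄) := inf_{p ∈ Δ(Θ), q ∈ Δ(Θ×L)}
  sup { E_{π∼p} L(M,π) : M ∈ M, E_{(π,ℓ)∼q} D_ℓ(M(π), M̄(π))² ≤ ε² }`,
where the supremum over the empty set is `−∞` (i.e. `⊥` in `EReal`). -/
noncomputable def pdecLDP {Θ Z ι : Type*} [MeasurableSpace Θ] [MeasurableSpace Z]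
    (Ms : ι → Θ → Measure Z) (loss : ι → Θ → ℝ) (Mb : Θ → Measure Z) (ε : ℝ) : EReal :=
  ⨅ (p : {p : Measure Θ // IsProbabilityMeasure p})
    (q : {q : Measure (Θ × (Z → ℝ)) // IsTestDist q}),
    sSup {x : EReal | ∃ i : ι, testErr Ms Mb q.1 i ≤ ε ^ 2 ∧
      x = ((∫ π, loss i π ∂p.1 : ℝ) : EReal)}

/-- Total variation distance `D_TV(P,Q) := sup_E |P(E) − Q(E)|`. -/
noncomputable def TVdist {Z : Type*} [MeasurableSpace Z] (P Q : Measure Z) : ℝ :=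
  ⨆ E : {E : Set Z // MeasurableSet E}, |(P E.1).toReal - (Q E.1).toReal|

/-- The `δ`-quantile loss of `p ∈ Δ(Θ)` under the loss `loss`:
`g^δ(p) := sup { Δ ≥ 0 : P_{π∼p}(loss(π) ≥ Δ) ≥ δ }` (valued in the extended reals). -/
noncomputable def quantileLoss {Θ : Type*} [MeasurableSpace Θ]
    (loss : Θ → ℝ) (p : Measure Θ) (δ : ℝ) : EReal :=
  sSup {x : EReal | ∃ Δ : ℝ, 0 ≤ Δ ∧ δ ≤ (p {π | Δ ≤ loss π}).toReal ∧ x = ((Δ : ℝ) : EReal)}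

/-- The quantile private PAC-DEC `p-dec^{q,LDP}_{ε,δ}(M, M̄)`: defined exactly as
`p-dec^{LDP}_ε(M, M̄)` but with `E_{π∼p} L(M,π)` replaced by the `δ`-quantile loss. -/
noncomputable def qpdecLDP {Θ Z ι : Type*} [MeasurableSpace Θ] [MeasurableSpace Z]
    (Ms : ι → Θ → Measure Z) (loss : ι → Θ → ℝ) (Mb : Θ → Measure Z) (ε δ : ℝ) : EReal :=
  ⨅ (p : {p : Measure Θ // IsProbabilityMeasure p})
    (q : {q : Measure (Θ × (Z → ℝ)) // IsTestDist q}),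
    sSup {x : EReal | ∃ i : ι, testErr Ms Mb q.1 i ≤ ε ^ 2 ∧
      x = quantileLoss (loss i) p.1 δ}

/-- The local DEC at the model `Ms i0`:
`p-dec^{loc}_ε(M, M₀) := sup { inf_π (L(M₁,π) + L(M₀,π)) :
    M₁ ∈ M, sup_π D_TV(M₁(π), M₀(π)) ≤ ε }`. -/
noncomputable def pdecLoc {Θ Z ι : Type*} [MeasurableSpace Θ] [MeasurableSpace Z]
    (Ms : ι → Θ → Measure Z) (loss : ι → Θ → ℝ) (i0 : ι) (ε : ℝ) : EReal :=
  sSup {x : EReal | ∃ i : ι, (∀ π, TVdist (Ms i π) (Ms i0 π) ≤ ε) ∧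
    x = ⨅ π : Θ, ((loss i π + loss i0 π : ℝ) : EReal)}

lemma abs_measure_sub_le_TVdist {Z : Type*} [MeasurableSpace Z] (P Q : Measure Z)
    [IsProbabilityMeasure P] [IsProbabilityMeasure Q] {E : Set Z} (hE : MeasurableSet E) :
    |P.real E - Q.real E| ≤ TVdist P Q := by
  unfold TVdist
  refine le_ciSup (f := fun E : {E : Set Z // MeasurableSet E} =>
    |(P E.1).toReal - (Q E.1).toReal|) ⟨1, ?_⟩ ⟨E, hE⟩
  rintro _ ⟨F, rfl⟩
  have h1 : P.real F.1 ≤ 1 := measureReal_le_one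
  have h2 : Q.real F.1 ≤ 1 := measureReal_le_one
  have h3 : 0 ≤ P.real F.1 := measureReal_nonneg
  have h4 : 0 ≤ Q.real F.1 := measureReal_nonneg
  change |P.real F.1 - Q.real F.1| ≤ 1
  rw [abs_le]
  constructor <;> linarith

/-- The layer-cake formula writes `E_P ℓ - E_Q ℓ` as the average over `t ∈ (0,1]` of
`P(ℓ ≥ t) - Q(ℓ ≥ t)`, each of which is at most the total variation distance. -/
lemma Dl_le_TVdist {Z : Type*} [MeasurableSpace Z] (P Q : Measure Z)
    [IsProbabilityMeasure P] [IsProbabilityMeasure Q] {ℓ : Z → ℝ} (hm : Measurable ℓ)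
    (hl : ∀ z, ℓ z ∈ Set.Icc (0 : ℝ) 1) : Dl ℓ P Q ≤ TVdist P Q := by
  have key : ∀ (ν : Measure Z) [IsProbabilityMeasure ν],
      (∫ z, ℓ z ∂ν = ∫ t in Set.Ioc (0 : ℝ) 1, ν.real {z | t ≤ ℓ z}) ∧
      IntegrableOn (fun t : ℝ => ν.real {z | t ≤ ℓ z}) (Set.Ioc (0 : ℝ) 1) := by
    intro ν _
    constructor
    · refine Integrable.integral_eq_integral_Ioc_meas_le ?_
        (Filter.Eventually.of_forall fun z => (hl z).1)
        (Filter.Eventually.of_forall fun z => (hl z).2)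
      refine Integrable.of_bound hm.aestronglyMeasurable 1
        (Filter.Eventually.of_forall fun z => ?_)
      rw [Real.norm_eq_abs, abs_of_nonneg (hl z).1]
      exact (hl z).2
    · have hanti : Antitone (fun t : ℝ => ν.real {z | t ≤ ℓ z}) := fun s t hst =>
        measureReal_mono fun z (hz : t ≤ ℓ z) => hst.trans hz
      refine Integrable.of_bound hanti.measurable.aestronglyMeasurable 1
        (Filter.Eventually.of_forall fun t => ?_)
      rw [Real.norm_eq_abs, abs_of_nonneg measureReal_nonneg]
      exact measureReal_le_one
  unfold Dl
  rw [(key P).1, (key Q).1, ← integral_sub (key P).2 (key Q).2, ← Real.norm_eq_abs]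
  refine (norm_setIntegral_le_of_norm_le_const (C := TVdist P Q) (by simp)
    fun t _ => ?_).trans (by simp)
  exact abs_measure_sub_le_TVdist P Q (measurableSet_le measurable_const hm)

/-- The set of admissible tests has outer measure one under `q` but need not be measurable, so a
bound on it does not directly hold almost everywhere. It does for integrable `f`, whose
sublevel set is null-measurable; otherwise the integral is `0`. -/
lemma integral_le_of_le_on_full {α : Type*} [MeasurableSpace α] (q : Measure α)
    [IsProbabilityMeasure q] {S : Set α} (hS : q S = 1) {f : α → ℝ} {c : ℝ} (hc : 0 ≤ c)
    (hf : ∀ x ∈ S, f x ≤ c) : ∫ x, f x ∂q ≤ c := by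
  by_cases hi : Integrable f q
  · have hnull : NullMeasurableSet {x | f x ≤ c} q :=
      nullMeasurableSet_le hi.aestronglyMeasurable.aemeasurable aemeasurable_const
    have h1 : q {x | f x ≤ c} = 1 := le_antisymm prob_le_one (hS ▸ measure_mono hf)
    have hae : ∀ᵐ x ∂q, f x ≤ c := by
      have h2 := prob_compl_eq_zero_iff₀ hnull |>.2 h1
      exact h2
    calc ∫ x, f x ∂q ≤ ∫ _, c ∂q := integral_mono_ae hi (integrable_const c) hae
      _ = c := by simp
  · rw [integral_undef hi]
    exact hc

/-- If the pointwise sum of two losses is at least `c`, then one of the two median losses is at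
least `c / 2`. -/
lemma half_le_quantileLoss_or {Θ : Type*} [MeasurableSpace Θ] (p : Measure Θ)
    [IsProbabilityMeasure p] {f g : Θ → ℝ} {c : ℝ} (hc : 0 ≤ c) (h : ∀ π, c ≤ f π + g π) :
    ((c / 2 : ℝ) : EReal) ≤ quantileLoss f p (1 / 2) ∨
      ((c / 2 : ℝ) : EReal) ≤ quantileLoss g p (1 / 2) := by
  have hcover : {π | c / 2 ≤ f π} ∪ {π | c / 2 ≤ g π} = Set.univ := by
    ext π
    simp only [Set.mem_union, Set.mem_ofPred_eq, Set.mem_univ, iff_true]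
    by_contra! hlt
    linarith [h π]
  have hsum : (1 : ℝ) ≤ p.real {π | c / 2 ≤ f π} + p.real {π | c / 2 ≤ g π} := by
    have h1 := measureReal_union_le (μ := p) {π | c / 2 ≤ f π} {π | c / 2 ≤ g π}
    rwa [hcover, probReal_univ] at h1
  by_cases hfp : 1 / 2 ≤ p.real {π | c / 2 ≤ f π}
  · exact Or.inl (le_sSup ⟨c / 2, by positivity, hfp, rfl⟩)
  · exact Or.inr (le_sSup ⟨c / 2, by positivity,
      (by linarith : (1 : ℝ) / 2 ≤ p.real {π | c / 2 ≤ g π}), rfl⟩)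

/-- **Quantile private PAC-DEC of two-point subclasses dominates the local DEC.** For a
class `M = (Ms i)_{i : ι}` of models with losses `loss i ≥ 0`, a distinguished model
`M₀ = Ms i0 ∈ M` and every `ε > 0`:
`sup_{M₁∈M} p-dec^{q,LDP}_{ε,1/2}({M₁, M₀}, M₀) ≥ (1/2) p-dec^{loc}_ε(M, M₀)`. -/
theorem quantile_pdec_two_point_ge_local
    {Θ Z ι : Type*} [MeasurableSpace Θ] [MeasurableSingletonClass Θ] [MeasurableSpace Z]
    (Ms : ι → Θ → Measure Z) (hMs : ∀ i π, IsProbabilityMeasure (Ms i π))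
    (loss : ι → Θ → ℝ) (hloss : ∀ i π, 0 ≤ loss i π) (i0 : ι)
    (ε : ℝ) (hε : 0 < ε) :
    ((1 / 2 : ℝ) : EReal) * pdecLoc Ms loss i0 ε ≤
      ⨆ i : ι, qpdecLDP (fun b : Bool => if b then Ms i else Ms i0)
        (fun b => if b then loss i else loss i0) (Ms i0) ε (1 / 2) := by
  have hhalf : (0 : EReal) < ((1 / 2 : ℝ) : EReal) := by
    exact_mod_cast (by norm_num : (0 : ℝ) < 1 / 2)
  rw [mul_comm, ← EReal.le_div_iff_mul_le hhalf (EReal.coe_ne_top _)]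
  refine sSup_le ?_
  rintro _ ⟨i, hTV, rfl⟩
  rw [EReal.le_div_iff_mul_le hhalf (EReal.coe_ne_top _), mul_comm]
  refine le_trans ?_ (le_iSup _ i)
  refine le_iInf fun p => le_iInf fun q => ?_
  obtain ⟨p, hp⟩ := p
  obtain ⟨q, hq, hqS⟩ := q
  -- The existence of the probability measure `p` rules out `Θ = ∅`, so the infimum is real.
  have hne : Nonempty Θ := p.nonempty_of_neZero
  set c : ℝ := ⨅ π : Θ, (loss i π + loss i0 π) with hc_def
  have hnn : ∀ π, 0 ≤ loss i π + loss i0 π := fun π => add_nonneg (hloss _ _) (hloss _ _)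
  have hc : 0 ≤ c := le_ciInf hnn
  have hcle : ∀ π, c ≤ loss i π + loss i0 π := fun π =>
    ciInf_le ⟨0, by rintro _ ⟨π, rfl⟩; exact hnn π⟩ π
  have hinf : (⨅ π : Θ, ((loss i π + loss i0 π : ℝ) : EReal)) ≤ (c : EReal) := by
    refine EReal.le_of_forall_lt_iff_le.1 fun z hz => ?_
    obtain ⟨π, hπ⟩ := exists_lt_of_ciInf_lt (EReal.coe_lt_coe_iff.1 hz)
    exact (iInf_le _ π).trans (EReal.coe_le_coe_iff.2 hπ.le)
  have hle : ((1 / 2 : ℝ) : EReal) * (⨅ π : Θ, ((loss i π + loss i0 π : ℝ) : EReal)) ≤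
      ((c / 2 : ℝ) : EReal) := by
    refine (mul_le_mul_of_nonneg_left hinf hhalf.le).trans (le_of_eq ?_)
    rw [← EReal.coe_mul]
    congr 1
    ring
  refine hle.trans ?_
  have htrue : testErr (fun b : Bool => if b then Ms i else Ms i0) (Ms i0) q true ≤ ε ^ 2 := by
    refine integral_le_of_le_on_full q hqS (sq_nonneg ε) ?_
    rintro ⟨π, ℓ⟩ ⟨hm, hl⟩
    have := hMs i π
    have := hMs i0 π
    exact pow_le_pow_left₀ (abs_nonneg _) ((Dl_le_TVdist _ _ hm hl).trans (hTV π)) 2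
  have hfalse : testErr (fun b : Bool => if b then Ms i else Ms i0) (Ms i0) q false ≤ ε ^ 2 := by
    simp only [testErr, Dl, Bool.false_eq_true, if_false, sub_self, abs_zero]
    simpa using sq_nonneg ε
  rcases half_le_quantileLoss_or p hc hcle with h | h
  · exact h.trans (le_sSup ⟨true, htrue, rfl⟩)
  · exact h.trans (le_sSup ⟨false, hfalse, rfl⟩)
end

section
/- Exponential private PAC-DEC lower bound for learning parity: There is a universal constant c > 0 with the following property. Let d ≥ 2, X = {0,1}^d, and for S ⊆ [d] let f_S : X → {−1,1} be f_S(x) = (−1)^{Σ_{i∈S} x_i}. Let M_parity be the class of all probability distributions of (x,y) ∈ X × {−1,1} of the form x ∼ ν, y = f_S(x), where ν ranges over all probability distributions on X and S over all subsets of [d]; the decision space is Π = { f : X → {−1,1} } and the loss is L(M, f) = P_{(x,y)∼M}( f(x) ≠ y ). Then for every ε ∈ [0, (2^d − 1)^{−1/2}]: p-dec^{LDP}_ε(M_parity) ≥ c·√(2^d)·ε. -/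
/-!
The hard models share one covariate law: mass `1 - t` at the origin, where every parity is `+1`,
and mass `t = ε √(2^d - 1)` spread evenly over the nonzero points. The reference model is their
uniform mixture over all `S`.

For a fixed `[0,1]`-valued test, the difference of expectations between the `S`-th model and the
reference is `∑_{x ≠ 0} w(x) g(x) χ_S(x)` with `|g| ≤ 1/2`, so by orthogonality of the parities
(`sum_chi_mul_chi`) its mean square over `S` is at most `t² / (4 (2^d - 1)) = ε² / 4`
(`sum_diff_sq_le`). Averaging over the test distribution, the mean of the test error over `S` is
at most `ε² / 4`. On the other hand the error of any predictor on the nonzero points averages to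
`t / 2` over `S` and never exceeds `t`. A Markov-type argument (`exists_good`) gives one `S` with
test error at most `ε²` and loss at least `t / 4`; since `2^d - 1 ≥ 2^d / 4`, the constant `1/8`
works.
-/

open MeasureTheory
open scoped ENNReal

/-- `evenParity d S x` is `true` iff `Σ_{i ∈ S} x_i` is even, i.e. iff the parity function
`f_S(x) = (−1)^{Σ_{i∈S} x_i}` equals `+1` (we encode the label set `{−1,1}` by `Bool`,
with `true ↔ +1`). -/
def evenParity (d : ℕ) (S : Finset (Fin d)) (x : Fin d → Bool) : Bool :=
  decide ((S.filter fun i => x i = true).card % 2 = 0)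

/-- The parity model: the distribution of `(x, y)` with `x ∼ ν` and `y = f_S(x)`. -/
noncomputable def parityModel (d : ℕ) (ν : Measure (Fin d → Bool)) (S : Finset (Fin d)) :
    Measure ((Fin d → Bool) × Bool) :=
  ν.map fun x => (x, evenParity d S x)

/-- The class of all finite mixtures of parity models, i.e. `co(M_parity)`. -/
def coParity (d : ℕ) : Set (Measure ((Fin d → Bool) × Bool)) :=
  {Mb | ∃ (n : ℕ) (w : Fin n → ℝ) (ν : Fin n → Measure (Fin d → Bool))
      (S : Fin n → Finset (Fin d)),
      (∀ k, 0 ≤ w k) ∧ (∑ k, w k) = 1 ∧ (∀ k, IsProbabilityMeasure (ν k)) ∧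
      Mb = ∑ k, ENNReal.ofReal (w k) • parityModel d (ν k) (S k)}

/-- The sign `±1` encoded by a Boolean, with `true` standing for `+1`. -/
noncomputable def sg (b : Bool) : ℝ := if b then 1 else -1

/-- The real-valued parity character `χ_S(x) = (-1)^{∑_{i ∈ S} x_i}`. -/
noncomputable def chi (d : ℕ) (S : Finset (Fin d)) (x : Fin d → Bool) : ℝ :=
  sg (evenParity d S x)

/-- The origin of `{0,1}^d`. -/
def orig (d : ℕ) : Fin d → Bool := fun _ => false

/-- Point masses of the covariate law: `1 - t` at the origin and `t` spread evenly over the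
`2^d - 1` other points. -/
noncomputable def wt (d : ℕ) (t : ℝ) (x : Fin d → Bool) : ℝ :=
  if x = orig d then 1 - t else t / ((2 : ℝ) ^ d - 1)

/-- The measure on `{0,1}^d` with point masses `wt d t`, a probability measure for
`0 ≤ t ≤ 1`. -/
noncomputable def nuT (d : ℕ) (t : ℝ) : Measure (Fin d → Bool) :=
  ∑ x, ENNReal.ofReal (wt d t x) • Measure.dirac x

/-- The uniform mixture over all `S` of the parity models with covariate law `nuT d t`. -/
noncomputable def refM (d : ℕ) (t : ℝ) : Measure ((Fin d → Bool) × Bool) :=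
  ∑ k : Fin (Fintype.card (Finset (Fin d))),
    ENNReal.ofReal (((2 : ℝ) ^ d)⁻¹) •
      parityModel d (nuT d t) ((Fintype.equivFin (Finset (Fin d))).symm k)

/-- The probability under the `S`-th model of an error of `f` at a nonzero point. -/
noncomputable def nzLoss (d : ℕ) (t : ℝ) (S : Finset (Fin d)) (f : (Fin d → Bool) → Bool) : ℝ :=
  ∑ x, if x = orig d then 0 else wt d t x * ((1 - sg (f x) * chi d S x) / 2)

/-! ### Characters -/

lemma chi_eq_prod (d : ℕ) (S : Finset (Fin d)) (x : Fin d → Bool) :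
    chi d S x = ∏ i ∈ S, sg (!(x i)) := by
  have h : ∀ i, sg (!(x i)) = if x i = true then (-1 : ℝ) else 1 := by
    intro i
    cases x i <;> simp [sg]
  simp only [h, Finset.prod_ite, Finset.prod_const, one_pow, mul_one]
  unfold chi evenParity sg
  rcases Nat.even_or_odd (S.filter fun i => x i = true).card with h | h
  · simp [h.neg_one_pow, Nat.even_iff.mp h]
  · simp [h.neg_one_pow, Nat.odd_iff.mp h]

lemma sum_chi_mul_chi (d : ℕ) (x y : Fin d → Bool) :
    ∑ S, chi d S x * chi d S y = if x = y then (2 : ℝ) ^ d else 0 := by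
  simp only [chi_eq_prod, ← Finset.prod_mul_distrib]
  have h := Finset.prod_one_add (R := ℝ) (s := (Finset.univ : Finset (Fin d)))
    (f := fun i => sg (!(x i)) * sg (!(y i)))
  rw [Finset.powerset_univ] at h
  rw [← h]
  split_ifs with hxy
  · subst hxy
    have : ∀ i, 1 + sg (!(x i)) * sg (!(x i)) = 2 := by
      intro i
      cases x i <;> norm_num [sg]
    simp [this]
  · obtain ⟨i, hi⟩ := Function.ne_iff.mp hxy
    apply Finset.prod_eq_zero (Finset.mem_univ i)
    revert hi
    cases x i <;> cases y i <;> simp [sg]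

lemma chi_orig (d : ℕ) (S : Finset (Fin d)) : chi d S (orig d) = 1 := by
  simp [chi_eq_prod, orig, sg]

lemma sum_chi (d : ℕ) (x : Fin d → Bool) :
    ∑ S, chi d S x = if x = orig d then (2 : ℝ) ^ d else 0 := by
  simpa [chi_orig] using sum_chi_mul_chi d x (orig d)

/-- Parseval's identity for the parity characters. -/
lemma sum_sq_chi (d : ℕ) (h : (Fin d → Bool) → ℝ) :
    ∑ S, (∑ x, h x * chi d S x) ^ 2 = (2 : ℝ) ^ d * ∑ x, h x ^ 2 := by
  calc ∑ S, (∑ x, h x * chi d S x) ^ 2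
      = ∑ S, ∑ x, ∑ y, h x * h y * (chi d S x * chi d S y) := by
        refine Finset.sum_congr rfl fun S _ => ?_
        rw [sq, Finset.sum_mul_sum]
        refine Finset.sum_congr rfl fun x _ => Finset.sum_congr rfl fun y _ => ?_
        ring
    _ = ∑ x, ∑ y, h x * h y * ∑ S, chi d S x * chi d S y := by
        rw [Finset.sum_comm]
        refine Finset.sum_congr rfl fun x _ => ?_
        rw [Finset.sum_comm]
        refine Finset.sum_congr rfl fun y _ => ?_
        rw [Finset.mul_sum]
    _ = _ := by
        simp only [sum_chi_mul_chi, mul_ite, mul_zero, Finset.sum_ite_eq, Finset.mem_univ, if_true]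
        rw [Finset.mul_sum]
        refine Finset.sum_congr rfl fun x _ => ?_
        ring

/-! ### The covariate law and the reference model -/

lemma two_pow_sub_one_pos {d : ℕ} (hd : 2 ≤ d) : (3 : ℝ) ≤ (2 : ℝ) ^ d - 1 := by
  have : (2 : ℝ) ^ 2 ≤ (2 : ℝ) ^ d := pow_le_pow_right₀ (by norm_num) hd
  linarith

lemma sum_off_orig (d : ℕ) (a : ℝ) :
    ∑ x : Fin d → Bool, (if x = orig d then 0 else a) = ((2 : ℝ) ^ d - 1) * a := by
  have h : ∀ x : Fin d → Bool, (if x = orig d then 0 else a) = a - if x = orig d then a else 0 := by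
    intro x
    split_ifs <;> simp
  simp only [h, Finset.sum_sub_distrib, Finset.sum_ite_eq', Finset.mem_univ, if_true]
  simp
  ring

lemma wt_nonneg {d : ℕ} (hd : 2 ≤ d) {t : ℝ} (h0 : 0 ≤ t) (h1 : t ≤ 1) (x : Fin d → Bool) :
    0 ≤ wt d t x := by
  have := two_pow_sub_one_pos hd
  unfold wt
  split_ifs
  · linarith
  · exact div_nonneg h0 (by linarith)

lemma sum_wt {d : ℕ} (hd : 2 ≤ d) (t : ℝ) : ∑ x, wt d t x = 1 := by
  have := two_pow_sub_one_pos hd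
  have h : ∀ x, wt d t x = (if x = orig d then 1 - t else 0) +
      if x = orig d then 0 else t / ((2 : ℝ) ^ d - 1) := by
    intro x
    unfold wt
    split_ifs <;> simp
  simp only [h, Finset.sum_add_distrib, sum_off_orig, Finset.sum_ite_eq', Finset.mem_univ, if_true]
  field_simp
  ring

lemma nuT_prob {d : ℕ} (hd : 2 ≤ d) {t : ℝ} (h0 : 0 ≤ t) (h1 : t ≤ 1) :
    IsProbabilityMeasure (nuT d t) := by
  constructor
  simp only [nuT, Measure.coe_finsetSum, Finset.sum_apply, Measure.smul_apply, measure_univ,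
    smul_eq_mul, mul_one]
  rw [← ENNReal.ofReal_sum_of_nonneg fun x _ => wt_nonneg hd h0 h1 x, sum_wt hd,
    ENNReal.ofReal_one]

lemma integral_nuT {d : ℕ} (hd : 2 ≤ d) {t : ℝ} (h0 : 0 ≤ t) (h1 : t ≤ 1)
    (g : (Fin d → Bool) → ℝ) : ∫ x, g x ∂(nuT d t) = ∑ x, wt d t x * g x := by
  unfold nuT
  rw [integral_finsetSum_measure]
  · refine Finset.sum_congr rfl fun x _ => ?_
    rw [integral_smul_measure, integral_dirac, ENNReal.toReal_ofReal (wt_nonneg hd h0 h1 x),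
      smul_eq_mul]
  · intro x _
    exact (Integrable.of_finite).smul_measure ENNReal.ofReal_ne_top

lemma integral_model {d : ℕ} (hd : 2 ≤ d) {t : ℝ} (h0 : 0 ≤ t) (h1 : t ≤ 1)
    (S : Finset (Fin d)) (g : (Fin d → Bool) × Bool → ℝ) :
    ∫ z, g z ∂(parityModel d (nuT d t) S) = ∑ x, wt d t x * g (x, evenParity d S x) := by
  unfold parityModel
  rw [integral_map (Measurable.of_discrete).aemeasurable
    (Measurable.of_discrete).aestronglyMeasurable, integral_nuT hd h0 h1]

lemma model_prob {d : ℕ} (hd : 2 ≤ d) {t : ℝ} (h0 : 0 ≤ t) (h1 : t ≤ 1)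
    (S : Finset (Fin d)) : IsProbabilityMeasure (parityModel d (nuT d t) S) := by
  have := nuT_prob hd h0 h1
  exact Measure.isProbabilityMeasure_map (Measurable.of_discrete).aemeasurable

lemma integral_refM {d : ℕ} (hd : 2 ≤ d) {t : ℝ} (h0 : 0 ≤ t) (h1 : t ≤ 1)
    (g : (Fin d → Bool) × Bool → ℝ) :
    ∫ z, g z ∂(refM d t) =
      ((2 : ℝ) ^ d)⁻¹ * ∑ S, ∑ x, wt d t x * g (x, evenParity d S x) := by
  have := model_prob hd h0 h1
  unfold refM
  rw [integral_finsetSum_measure]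
  · simp only [integral_smul_measure, integral_model hd h0 h1]
    rw [Equiv.sum_comp (Fintype.equivFin (Finset (Fin d))).symm
      (fun S => (ENNReal.ofReal (((2 : ℝ) ^ d)⁻¹)).toReal •
        ∑ x, wt d t x * g (x, evenParity d S x)),
      ENNReal.toReal_ofReal (by positivity)]
    simp only [smul_eq_mul, Finset.mul_sum]
  · intro x _
    exact (Integrable.of_finite).smul_measure ENNReal.ofReal_ne_top

lemma refM_mem {d : ℕ} (hd : 2 ≤ d) {t : ℝ} (h0 : 0 ≤ t) (h1 : t ≤ 1) :
    refM d t ∈ coParity d := by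
  refine ⟨_, fun _ => ((2 : ℝ) ^ d)⁻¹, fun _ => nuT d t,
    fun k => (Fintype.equivFin (Finset (Fin d))).symm k, fun _ => by positivity, ?_,
    fun _ => nuT_prob hd h0 h1, rfl⟩
  simp

/-! ### Test errors -/

/-- The difference of expectations involves only nonzero points, because there the parities
average out over `S`, while at the origin all models agree. -/
lemma diff_eq {d : ℕ} (hd : 2 ≤ d) {t : ℝ} (h0 : 0 ≤ t) (h1 : t ≤ 1)
    (S : Finset (Fin d)) (g : (Fin d → Bool) × Bool → ℝ) :
    (∫ z, g z ∂(parityModel d (nuT d t) S)) - ∫ z, g z ∂(refM d t) =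
      ∑ x, (if x = orig d then 0 else
        wt d t x * ((g (x, true) - g (x, false)) / 2)) * chi d S x := by
  have key : ∀ S : Finset (Fin d), ∀ x, g (x, evenParity d S x) =
      (g (x, true) + g (x, false)) / 2 + (g (x, true) - g (x, false)) / 2 * chi d S x := by
    intro S x
    unfold chi sg
    cases evenParity d S x <;> simp <;> ring
  have hN : (2 : ℝ) ^ d ≠ 0 := by positivity
  rw [integral_model hd h0 h1, integral_refM hd h0 h1, Finset.sum_comm, Finset.mul_sum,
    ← Finset.sum_sub_distrib]
  refine Finset.sum_congr rfl fun x _ => ?_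
  rw [← Finset.mul_sum]
  simp only [key, Finset.sum_add_distrib, ← Finset.mul_sum, sum_chi]
  simp only [Finset.sum_const, Finset.card_univ, Fintype.card_finset, Fintype.card_fin,
    nsmul_eq_mul, Nat.cast_pow, Nat.cast_ofNat]
  split_ifs with hx
  · subst hx
    rw [chi_orig]
    field_simp
    ring
  · field_simp
    ring

lemma sum_diff_sq_le {d : ℕ} (hd : 2 ≤ d) {t : ℝ} (h0 : 0 ≤ t) (h1 : t ≤ 1)
    (g : (Fin d → Bool) × Bool → ℝ) (hg : ∀ z, g z ∈ Set.Icc (0 : ℝ) 1) :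
    ∑ S, (Dl g (parityModel d (nuT d t) S) (refM d t)) ^ 2 ≤
      (2 : ℝ) ^ d * (t ^ 2 / (4 * ((2 : ℝ) ^ d - 1))) := by
  have hN := two_pow_sub_one_pos hd
  simp only [Dl, sq_abs, diff_eq hd h0 h1]
  rw [sum_sq_chi]
  refine mul_le_mul_of_nonneg_left ?_ (by positivity)
  calc _ ≤ ∑ x : Fin d → Bool, (if x = orig d then 0 else (t / ((2 : ℝ) ^ d - 1)) ^ 2 / 4) := by
        refine Finset.sum_le_sum fun x _ => ?_
        split_ifs with hx
        · simp
        · have ht := hg (x, true)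
          have hf := hg (x, false)
          rw [Set.mem_Icc] at ht hf
          have : ((g (x, true) - g (x, false)) / 2) ^ 2 ≤ 1 / 4 := by nlinarith
          rw [mul_pow, wt, if_neg hx]
          nlinarith [sq_nonneg (t / ((2 : ℝ) ^ d - 1))]
    _ = _ := by
        rw [sum_off_orig]
        have : (2 : ℝ) ^ d - 1 ≠ 0 := by linarith
        field_simp

/-! ### Losses -/

lemma loss_ge_nzLoss {d : ℕ} (hd : 2 ≤ d) {t : ℝ} (h0 : 0 ≤ t) (h1 : t ≤ 1)
    (S : Finset (Fin d)) (f : (Fin d → Bool) → Bool) :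
    nzLoss d t S f ≤ (parityModel d (nuT d t) S {z | f z.1 ≠ z.2}).toReal := by
  have := model_prob hd h0 h1 S
  have h := integral_indicator_one (μ := parityModel d (nuT d t) S)
    (s := {z | f z.1 ≠ z.2}) (MeasurableSet.of_discrete)
  rw [integral_model hd h0 h1] at h
  change _ ≤ (parityModel d (nuT d t) S).real _
  rw [← h]
  refine Finset.sum_le_sum fun x _ => ?_
  have hw := wt_nonneg hd h0 h1 x
  split_ifs
  · exact mul_nonneg hw (Set.indicator_nonneg (by simp) _)
  · refine mul_le_mul_of_nonneg_left ?_ hw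
    unfold chi sg Set.indicator
    cases hf : f x <;> cases evenParity d S x <;> norm_num [hf]

lemma nzLoss_le {d : ℕ} (hd : 2 ≤ d) {t : ℝ} (h0 : 0 ≤ t)
    (S : Finset (Fin d)) (f : (Fin d → Bool) → Bool) : nzLoss d t S f ≤ t := by
  have hN := two_pow_sub_one_pos hd
  calc nzLoss d t S f
      ≤ ∑ x : Fin d → Bool, (if x = orig d then 0 else t / ((2 : ℝ) ^ d - 1)) := by
        refine Finset.sum_le_sum fun x _ => ?_
        split_ifs with hx
        · exact le_rfl
        · rw [wt, if_neg hx]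
          refine mul_le_of_le_one_right (div_nonneg h0 (by linarith)) ?_
          unfold chi sg
          cases f x <;> cases evenParity d S x <;> norm_num
    _ = t := by
        rw [sum_off_orig]
        field_simp

lemma sum_nzLoss {d : ℕ} (hd : 2 ≤ d) (t : ℝ) (f : (Fin d → Bool) → Bool) :
    ∑ S, nzLoss d t S f = (2 : ℝ) ^ d * (t / 2) := by
  have hN := two_pow_sub_one_pos hd
  unfold nzLoss
  rw [Finset.sum_comm]
  calc _ = ∑ x : Fin d → Bool,
        (if x = orig d then 0 else (2 : ℝ) ^ d * (t / ((2 : ℝ) ^ d - 1) / 2)) := by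
        refine Finset.sum_congr rfl fun x _ => ?_
        split_ifs with hx
        · simp
        · rw [← Finset.mul_sum, ← Finset.sum_div, Finset.sum_sub_distrib, ← Finset.mul_sum,
            sum_chi, if_neg hx, wt, if_neg hx]
          simp
          ring
    _ = _ := by
        rw [sum_off_orig]
        field_simp

/-! ### Selecting a hard model -/

/-- Markov-type selection: if the nonnegative errors average to at most `e / 4` and the values
`r ≤ t` average to `t / 2`, where `e` and `t` vanish together, some index has error at most
`e` and value at least `t / 4`. -/
lemma exists_good {ι : Type*} [Fintype ι] (N : ℝ) (hN : 0 < N) (hc : (Fintype.card ι : ℝ) = N)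
    (err r : ι → ℝ) (e t : ℝ) (he : 0 ≤ e) (ht : 0 ≤ t) (het : e = 0 ↔ t = 0)
    (herr : ∀ i, 0 ≤ err i) (hr : ∀ i, r i ≤ t)
    (hsum : ∑ i, err i ≤ N * (e / 4)) (hrs : ∑ i, r i = N * (t / 2)) :
    ∃ i, err i ≤ e ∧ t / 4 ≤ r i := by
  rcases he.eq_or_lt with he0 | hepos
  · -- All errors vanish and `t = 0`, so it remains to find a nonnegative value.
    have ht0 := het.mp he0.symm
    subst ht0
    subst he0
    have hz : ∑ i, err i = 0 :=
      le_antisymm (by simpa using hsum) (Finset.sum_nonneg fun i _ => herr i)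
    rw [Finset.sum_eq_zero_iff_of_nonneg fun i _ => herr i] at hz
    have hne : (Finset.univ : Finset ι).Nonempty := by
      rw [← Finset.card_pos, Finset.card_univ]
      exact_mod_cast hc ▸ hN
    obtain ⟨i, -, hi⟩ := Finset.exists_le_of_sum_le (f := fun _ => (0 : ℝ)) (g := r) hne
      (by simp [hrs])
    exact ⟨i, (hz i (Finset.mem_univ i)).le, by simpa using hi⟩
  · by_contra! hcon
    have htpos : 0 < t := ht.lt_of_ne fun h => hepos.ne' (het.mpr h.symm)
    have h : ∀ i, e * r i ≤ e * (t / 4) + 3 * t / 4 * err i := by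
      intro i
      rcases le_or_gt (err i) e with h | h
      · have := hcon i h
        have := herr i
        nlinarith [mul_nonneg htpos.le (herr i)]
      · nlinarith [hr i]
    have h2 := Finset.sum_le_sum fun i (_ : i ∈ Finset.univ) => h i
    rw [← Finset.mul_sum, Finset.sum_add_distrib, ← Finset.mul_sum Finset.univ err, hrs] at h2
    simp only [Finset.sum_const, Finset.card_univ, nsmul_eq_mul, hc] at h2
    have h3 := mul_le_mul_of_nonneg_left hsum (by positivity : 0 ≤ 3 * t / 4)
    have h4 : 0 < N * e * t := by positivity
    nlinarith

/-- **Exponential private PAC-DEC lower bound for learning parity.** There is a universal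
constant `c > 0` such that, for every `d ≥ 2` and `ε ∈ [0, (2^d − 1)^{−1/2}]`, the private
PAC-DEC of the parity class `M_parity` (models `x ∼ ν`, `y = f_S(x)`; decisions
`f : {0,1}^d → {−1,1}`; loss `L(M, f) = P_{(x,y)∼M}(f(x) ≠ y)`; reference models ranging
over `co(M_parity)`) satisfies `p-dec^{LDP}_ε(M_parity) ≥ c √(2^d) ε`. -/
theorem parity_pdec_lower :
    ∃ c : ℝ, 0 < c ∧ ∀ d : ℕ, 2 ≤ d → ∀ ε : ℝ, 0 ≤ ε →
      ε * Real.sqrt ((2 : ℝ) ^ d - 1) ≤ 1 →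
      ((c * Real.sqrt ((2 : ℝ) ^ d) * ε : ℝ) : EReal) ≤
        ⨆ Mb : coParity d,
          pdecLDP
            (fun (iv : {ν : Measure (Fin d → Bool) // IsProbabilityMeasure ν} ×
                Finset (Fin d)) (_ : (Fin d → Bool) → Bool) => parityModel d iv.1.1 iv.2)
            (fun iv f => (parityModel d iv.1.1 iv.2 {z | f z.1 ≠ z.2}).toReal)
            (fun _ => Mb.1) ε := by
  refine ⟨1 / 8, by norm_num, fun d hd ε hε hε1 => ?_⟩
  have hN := two_pow_sub_one_pos hd
  set t : ℝ := ε * Real.sqrt ((2 : ℝ) ^ d - 1) with ht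
  have h0 : 0 ≤ t := by positivity
  have hsq : t ^ 2 = ε ^ 2 * ((2 : ℝ) ^ d - 1) := by
    rw [ht, mul_pow, Real.sq_sqrt (by linarith)]
  refine le_iSup_of_le ⟨refM d t, refM_mem hd h0 hε1⟩ ?_
  refine le_iInf fun p => le_iInf fun q => ?_
  obtain ⟨p, hp⟩ := p
  obtain ⟨q, hq, hq1⟩ := q
  dsimp only
  -- Almost every test is `[0,1]`-valued.
  have hae : ∀ᵐ pl ∂q, ∀ z, pl.2 z ∈ Set.Icc (0 : ℝ) 1 := by
    have hm : MeasurableSet {pl : ((Fin d → Bool) → Bool) × ((Fin d → Bool) × Bool → ℝ) |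
        Measurable pl.2 ∧ ∀ z, pl.2 z ∈ Set.Icc (0 : ℝ) 1} := by
      have he : {pl : ((Fin d → Bool) → Bool) × ((Fin d → Bool) × Bool → ℝ) |
          Measurable pl.2 ∧ ∀ z, pl.2 z ∈ Set.Icc (0 : ℝ) 1} =
          ⋂ z, (fun pl => pl.2 z) ⁻¹' Set.Icc (0 : ℝ) 1 := by
        ext pl
        simp only [Set.mem_ofPred_eq, Set.mem_iInter, Set.mem_preimage]
        exact ⟨fun h => h.2, fun h => ⟨Measurable.of_discrete, h⟩⟩
      rw [he]
      exact MeasurableSet.iInter fun z => measurableSet_Icc.preimage (by fun_prop)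
    have := (mem_ae_iff_prob_eq_one hm).mpr hq1
    filter_upwards [this] with pl h
    exact h.2
  have hbd : ∀ᵐ pl ∂q, ∑ S, (Dl pl.2 (parityModel d (nuT d t) S) (refM d t)) ^ 2 ≤
      (2 : ℝ) ^ d * (ε ^ 2 / 4) := by
    filter_upwards [hae] with pl h
    refine (sum_diff_sq_le hd h0 hε1 pl.2 h).trans (le_of_eq ?_)
    rw [hsq]
    field_simp
  have hint : ∀ S, Integrable (fun pl : ((Fin d → Bool) → Bool) × ((Fin d → Bool) × Bool → ℝ) =>
      (Dl pl.2 (parityModel d (nuT d t) S) (refM d t)) ^ 2) q := by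
    intro S
    refine Integrable.of_bound (C := (2 : ℝ) ^ d * (ε ^ 2 / 4)) ?_ ?_
    · refine Measurable.aestronglyMeasurable ?_
      simp only [Dl, sq_abs, diff_eq hd h0 hε1]
      refine Measurable.pow_const (Finset.measurable_fun_sum _ fun x _ => ?_) 2
      split_ifs
      · fun_prop
      · fun_prop
    · filter_upwards [hbd] with pl h
      rw [Real.norm_of_nonneg (sq_nonneg _)]
      exact (Finset.single_le_sum
        (f := fun S => (Dl pl.2 (parityModel d (nuT d t) S) (refM d t)) ^ 2)
        (fun S _ => sq_nonneg _) (Finset.mem_univ S)).trans h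
  obtain ⟨S, hS1, hS2⟩ := exists_good (ι := Finset (Fin d)) ((2 : ℝ) ^ d) (by positivity) (by simp)
    (fun S => ∫ pl, (Dl pl.2 (parityModel d (nuT d t) S) (refM d t)) ^ 2 ∂q)
    (fun S => ∫ f, nzLoss d t S f ∂p) (ε ^ 2) t (sq_nonneg _) h0
    (by
      have : Real.sqrt ((2 : ℝ) ^ d - 1) ≠ 0 := (Real.sqrt_pos.mpr (by linarith)).ne'
      simp [ht, this])
    (fun S => integral_nonneg fun _ => sq_nonneg _)
    (fun S => by
      refine (integral_mono Integrable.of_finite (integrable_const t)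
        fun f => nzLoss_le hd h0 S f).trans ?_
      simp)
    (by
      rw [← integral_finsetSum _ fun S _ => hint S]
      refine (integral_mono_ae (integrable_finsetSum _ fun S _ => hint S)
        (integrable_const _) hbd).trans ?_
      simp)
    (by
      rw [← integral_finsetSum _ fun S _ => Integrable.of_finite]
      simp [sum_nzLoss hd])
  refine le_trans ?_ (le_sSup ⟨(⟨nuT d t, nuT_prob hd h0 hε1⟩, S), hS1, rfl⟩)
  rw [EReal.coe_le_coe_iff]
  calc 1 / 8 * Real.sqrt ((2 : ℝ) ^ d) * ε ≤ t / 4 := by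
        -- `2^d ≤ 4 (2^d - 1)`, hence `√(2^d) ≤ 2 √(2^d - 1)`.
        have : Real.sqrt ((2 : ℝ) ^ d) ≤ 2 * Real.sqrt ((2 : ℝ) ^ d - 1) := by
          rw [Real.sqrt_le_left (by positivity), mul_pow, Real.sq_sqrt (by linarith)]
          linarith
        rw [ht]
        nlinarith
    _ ≤ _ := hS2
    _ ≤ _ := integral_mono Integrable.of_finite Integrable.of_finite
        fun f => loss_ge_nzLoss hd h0 hε1 S f
end
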